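/- There is a constant C>0 with the following property. Let R≥1, L>0, ℓ∈(0,1), η∈(0,1), c=(c₁,c₂)∈ℝ², and let Q_ℓ=(c₁−ℓ/2, c₁+ℓ/2)×(c₂−ℓ/2, c₂+ℓ/2). Suppose Q_ℓ ⊂ {(x₁,x₂)∈ℝ² : |x₁|≤R/2 and |x₂|≥ℓ^{-2}}. Then inf{𝓔_{L,R}(w) : w∈H¹₀(Q_ℓ;ℂ), extended by 0 outside Q_ℓ} ≤ L^{-2/3} ∫_{Q_ℓ} g((1+η) L^{2/3} |x₂|) dx₁ dx₂ + C L^{-2/3} ( ℓ^{-1} L^{1/3} + η^{-1} ℓ⁴ ) ℓ², where C is independent of ℓ, η, c, L and R. -/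

import Mathlib

open MeasureTheory Real Set Filter Topology

noncomputable section

/-- The open square `Q_r = (-r/2, r/2) × (-r/2, r/2)`. -/
def Qsq (r : ℝ) : Set (ℝ × ℝ) := Ioo (-r/2) (r/2) ×ˢ Ioo (-r/2) (r/2)

/-- The vertical strip `S_R = (-R/2, R/2) × ℝ`. -/
def Strip (R : ℝ) : Set (ℝ × ℝ) := Ioo (-R/2) (R/2) ×ˢ (univ : Set ℝ)

/-- The magnetic potential `A₀(x) = (-x₂/2, x₁/2)` of the constant unit magnetic field. -/
def A₀ (x : ℝ × ℝ) : ℝ × ℝ := (-x.2 / 2, x.1 / 2)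

/-- The magnetic potential `A_van(x) = (-x₂²/2, 0)` generating the field `B(x) = x₂`. -/
def Avan (x : ℝ × ℝ) : ℝ × ℝ := (-x.2 ^ 2 / 2, 0)

/-- The magnetic gradient energy density `|(∇ - iA)u|²` at `x`. -/
def magGradSq (A : ℝ × ℝ → ℝ × ℝ) (u : ℝ × ℝ → ℂ) (x : ℝ × ℝ) : ℝ :=
  ‖fderiv ℝ u x (1, 0) - Complex.I * ((A x).1 : ℂ) * u x‖ ^ 2 +
  ‖fderiv ℝ u x (0, 1) - Complex.I * ((A x).2 : ℂ) * u x‖ ^ 2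

/-- The Ginzburg–Landau functional `F_{b,Q_r}` on the square `Q_r`. -/
def Fsq (b r : ℝ) (u : ℝ × ℝ → ℂ) : ℝ :=
  ∫ x in Qsq r, (b * magGradSq A₀ u x - ‖u x‖ ^ 2 + ‖u x‖ ^ 4 / 2)

/-- (Smooth surrogate of) membership in `H¹(Q_r; ℂ)`. -/
def MemH1sq (u : ℝ × ℝ → ℂ) : Prop := ContDiff ℝ 1 u

/-- (Smooth surrogate of) membership in `H¹₀(Q_r; ℂ)`: vanishing on the boundary. -/
def MemH10sq (r : ℝ) (u : ℝ × ℝ → ℂ) : Prop :=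
  ContDiff ℝ 1 u ∧ ∀ x ∈ frontier (Qsq r), u x = 0

/-- The Dirichlet ground-state energy `e_D(b, r)`. -/
def eD (b r : ℝ) : ℝ := sInf (Fsq b r '' {u | MemH10sq r u})

/-- The Neumann ground-state energy `e_N(b, r)`. -/
def eN (b r : ℝ) : ℝ := sInf (Fsq b r '' {u | MemH1sq u})

/-- The energy density of the strip functional `𝓔_{L,R}` at `x`. -/
def stripDensity (L : ℝ) (u : ℝ × ℝ → ℂ) (x : ℝ × ℝ) : ℝ :=
  magGradSq Avan u x - L ^ (-(2:ℝ)/3) * ‖u x‖ ^ 2 + (L ^ (-(2:ℝ)/3) / 2) * ‖u x‖ ^ 4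

/-- The strip functional `𝓔_{L,R}`. -/
def Estrip (L R : ℝ) (u : ℝ × ℝ → ℂ) : ℝ := ∫ x in Strip R, stripDensity L u x

/-- (Surrogate of) membership in the space `H¹_{mag,0}(S_R)`. -/
def MemH1mag0 (R : ℝ) (u : ℝ × ℝ → ℂ) : Prop :=
  ContDiff ℝ 1 u ∧
  IntegrableOn (fun x => ‖u x‖ ^ 2) (Strip R) ∧
  IntegrableOn (magGradSq Avan u) (Strip R) ∧
  IntegrableOn (fun x => ‖u x‖ ^ 4) (Strip R) ∧
  ∀ x ∈ frontier (Strip R), u x = 0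

/-- The ground-state energy `e_gs(L; R)` of the strip functional. -/
def egs (L R : ℝ) : ℝ := sInf (Estrip L R '' {u | MemH1mag0 R u})

/-- `g : (0,∞) → ℝ` is the thermodynamic limit of the Dirichlet square energies. -/
def IsLimitG (g : ℝ → ℝ) : Prop :=
  ∀ b > 0, Tendsto (fun r => eD b r / r ^ 2) atTop (nhds (g b))

/-- `E : (0,∞) → ℝ` is the large-`R` limit of the strip energies. -/
def IsLimitE (E : ℝ → ℝ) : Prop :=
  ∀ L > 0, Tendsto (fun R => egs L R / R) atTop (nhds (E L))

/-- One-dimensional cutoff. -/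
def pc (r δ t : ℝ) : ℝ :=
  Real.smoothTransition ((t + r/2)/δ) * Real.smoothTransition ((r/2 - t)/δ)

lemma pc_contDiff (r δ : ℝ) : ContDiff ℝ 1 (pc r δ) := by
  unfold pc
  have h : ContDiff ℝ 1 Real.smoothTransition := Real.smoothTransition.contDiff
  exact (h.comp (by fun_prop)).mul (h.comp (by fun_prop))

lemma pc_nonneg (r δ t : ℝ) : 0 ≤ pc r δ t :=
  mul_nonneg (Real.smoothTransition.nonneg _) (Real.smoothTransition.nonneg _)

lemma pc_le_one (r δ t : ℝ) : pc r δ t ≤ 1 :=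
  mul_le_one₀ (Real.smoothTransition.le_one _) (Real.smoothTransition.nonneg _)
    (Real.smoothTransition.le_one _)

lemma pc_zero {r δ t : ℝ} (hδ : 0 < δ) (h : t ∉ Ioo (-r/2) (r/2)) : pc r δ t = 0 := by
  unfold pc
  by_cases h1 : -r/2 < t
  · have h2 : r/2 ≤ t := by
      by_contra h2
      exact h ⟨h1, not_le.mp h2⟩
    rw [Real.smoothTransition.zero_of_nonpos (x := (r/2 - t)/δ)
      (div_nonpos_of_nonpos_of_nonneg (by linarith) hδ.le), mul_zero]
  · rw [Real.smoothTransition.zero_of_nonpos (x := (t + r/2)/δ)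
      (div_nonpos_of_nonpos_of_nonneg (by linarith) hδ.le), zero_mul]

lemma pc_one {r δ t : ℝ} (hδ : 0 < δ) (h1 : -r/2 + δ ≤ t) (h2 : t ≤ r/2 - δ) :
    pc r δ t = 1 := by
  unfold pc
  rw [Real.smoothTransition.one_of_one_le (by rw [le_div_iff₀ hδ]; linarith),
    Real.smoothTransition.one_of_one_le (by rw [le_div_iff₀ hδ]; linarith), mul_one]

lemma pc_deriv_zero {r δ t : ℝ} (hδ : 0 < δ) (h : t ∉ Ioo (-r/2) (r/2)) :
    deriv (pc r δ) t = 0 := by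
  apply IsLocalMin.deriv_eq_zero
  refine Filter.Eventually.of_forall fun s => ?_
  rw [pc_zero hδ h]
  exact pc_nonneg _ _ _

lemma pc_deriv_zero' {r δ t : ℝ} (hδ : 0 < δ) (h1 : -r/2 + δ ≤ t) (h2 : t ≤ r/2 - δ) :
    deriv (pc r δ) t = 0 := by
  apply IsLocalMax.deriv_eq_zero
  refine Filter.Eventually.of_forall fun s => ?_
  show pc r δ s ≤ pc r δ t
  rw [pc_one hδ h1 h2]
  exact pc_le_one _ _ _

lemma st_deriv_bound : ∃ K > (0:ℝ), ∀ t, |deriv Real.smoothTransition t| ≤ K := by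
  have h : ContDiff ℝ 1 Real.smoothTransition := Real.smoothTransition.contDiff
  have hc : Continuous (deriv Real.smoothTransition) := h.continuous_deriv le_rfl
  obtain ⟨K, hK⟩ := (isCompact_Icc (a := (0:ℝ)) (b := 1)).exists_bound_of_continuousOn
    hc.continuousOn
  refine ⟨max K 1, lt_max_of_lt_right one_pos, fun t => ?_⟩
  by_cases h0 : 0 ≤ t
  · by_cases h1 : t ≤ 1
    · exact (hK t ⟨h0, h1⟩).trans (le_max_left _ _)
    · have : deriv Real.smoothTransition t = 0 := by
        apply IsLocalMax.deriv_eq_zero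
        refine Filter.Eventually.of_forall fun s => ?_
        show Real.smoothTransition s ≤ Real.smoothTransition t
        rw [Real.smoothTransition.one_of_one_le (not_le.mp h1).le]
        exact Real.smoothTransition.le_one _
      rw [this]; simp
  · have : deriv Real.smoothTransition t = 0 := by
      apply IsLocalMin.deriv_eq_zero
      refine Filter.Eventually.of_forall fun s => ?_
      rw [Real.smoothTransition.zero_of_nonpos (not_le.mp h0).le]
      exact Real.smoothTransition.nonneg _
    rw [this]; simp

lemma pc_deriv_bound : ∃ K > (0:ℝ), ∀ r δ t : ℝ, 0 < δ → |deriv (pc r δ) t| ≤ K / δ := by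
  obtain ⟨K, hK0, hK⟩ := st_deriv_bound
  refine ⟨2 * K, by positivity, fun r δ t hδ => ?_⟩
  have hd : Differentiable ℝ Real.smoothTransition :=
    (Real.smoothTransition.contDiff (n := 1)).differentiable one_ne_zero
  have h1 : HasDerivAt (fun s : ℝ => Real.smoothTransition ((s + r/2)/δ))
      (deriv Real.smoothTransition ((t + r/2)/δ) * (1/δ)) t := by
    refine HasDerivAt.comp t (hd _).hasDerivAt ?_
    exact ((hasDerivAt_id t).add_const _).div_const _
  have h2 : HasDerivAt (fun s : ℝ => Real.smoothTransition ((r/2 - s)/δ))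
      (deriv Real.smoothTransition ((r/2 - t)/δ) * (-1/δ)) t := by
    refine HasDerivAt.comp t (hd _).hasDerivAt ?_
    exact ((hasDerivAt_id t).const_sub _).div_const _
  have h3 : HasDerivAt (pc r δ) _ t := h1.mul h2
  rw [h3.deriv]
  set a := deriv Real.smoothTransition ((t + r/2)/δ)
  set c := deriv Real.smoothTransition ((r/2 - t)/δ)
  set p := Real.smoothTransition ((r/2 - t)/δ)
  set q := Real.smoothTransition ((t + r/2)/δ)
  have ha : |a| ≤ K := hK _
  have hc : |c| ≤ K := hK _
  have hp : |p| ≤ 1 := by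
    rw [abs_of_nonneg (Real.smoothTransition.nonneg _)]; exact Real.smoothTransition.le_one _
  have hq : |q| ≤ 1 := by
    rw [abs_of_nonneg (Real.smoothTransition.nonneg _)]; exact Real.smoothTransition.le_one _
  have : a * (1/δ) * p + q * (c * (-1/δ)) = (a * p - q * c) / δ := by ring
  rw [this, abs_div, abs_of_pos hδ]
  gcongr
  calc |a * p - q * c| ≤ |a * p| + |q * c| := abs_sub _ _
    _ ≤ K * 1 + 1 * K := by
        rw [abs_mul, abs_mul]; gcongr
    _ = 2 * K := by ring

lemma pc_hasDerivAt (r δ t : ℝ) : HasDerivAt (pc r δ) (deriv (pc r δ) t) t :=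
  ((pc_contDiff r δ).differentiable one_ne_zero t).hasDerivAt

/-- Integral of the squared derivative of the cutoff. -/
lemma pc_int_deriv {K r δ : ℝ} (hδ : 0 < δ) (hK0 : 0 < K)
    (hK : ∀ r δ t : ℝ, 0 < δ → |deriv (pc r δ) t| ≤ K / δ) :
    ∫ t, (deriv (pc r δ) t)^2 ≤ 2 * K^2 / δ := by
  have hb : ∀ t, (deriv (pc r δ) t)^2 ≤
      (Icc (-r/2) (-r/2+δ)).indicator (fun _ => K^2/δ^2) t +
      (Icc (r/2-δ) (r/2)).indicator (fun _ => K^2/δ^2) t := by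
    intro t
    have h0 : (deriv (pc r δ) t)^2 ≤ K^2/δ^2 := by
      rw [← div_pow]; exact sq_le_sq' (by linarith [abs_le.mp (hK r δ t hδ)])
        (by linarith [abs_le.mp (hK r δ t hδ)])
    have hn : 0 ≤ K^2/δ^2 := by positivity
    have i1 : 0 ≤ (Icc (-r/2) (-r/2+δ)).indicator (fun _ => K^2/δ^2) t :=
      indicator_nonneg (fun _ _ => hn) _
    have i2 : 0 ≤ (Icc (r/2-δ) (r/2)).indicator (fun _ => K^2/δ^2) t :=
      indicator_nonneg (fun _ _ => hn) _
    by_cases h1 : t ∈ Icc (-r/2) (-r/2+δ)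
    · rw [indicator_of_mem h1]; linarith
    by_cases h2 : t ∈ Icc (r/2-δ) (r/2)
    · rw [indicator_of_mem h2]; linarith
    have : deriv (pc r δ) t = 0 := by
      by_cases h3 : t ∈ Ioo (-r/2) (r/2)
      · apply pc_deriv_zero' hδ
        · by_contra h; exact h1 ⟨h3.1.le, (not_le.mp h).le⟩
        · by_contra h; exact h2 ⟨(not_le.mp h).le, h3.2.le⟩
      · exact pc_deriv_zero hδ h3
    rw [this]; simp only [ne_eq, OfNat.ofNat_ne_zero, not_false_eq_true, zero_pow]; linarith
  have I1 : Integrable ((Icc (-r/2) (-r/2+δ)).indicator (fun _ : ℝ => K^2/δ^2)) :=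
    (integrable_indicator_iff measurableSet_Icc).mpr (by simp)
  have I2 : Integrable ((Icc (r/2-δ) (r/2)).indicator (fun _ : ℝ => K^2/δ^2)) :=
    (integrable_indicator_iff measurableSet_Icc).mpr (by simp)
  calc ∫ t, (deriv (pc r δ) t)^2 ≤ ∫ t, ((Icc (-r/2) (-r/2+δ)).indicator (fun _ => K^2/δ^2) t +
      (Icc (r/2-δ) (r/2)).indicator (fun _ => K^2/δ^2) t) :=
        integral_mono_of_nonneg (Eventually.of_forall fun t => sq_nonneg _) (I1.add I2)
          (Eventually.of_forall hb)
    _ = 2 * K^2 / δ := by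
        rw [integral_add I1 I2, integral_indicator measurableSet_Icc,
          integral_indicator measurableSet_Icc]
        simp
        rw [max_eq_left hδ.le]
        field_simp
        ring

lemma pc_sq_cont (r δ : ℝ) : Continuous (pc r δ) := (pc_contDiff r δ).continuous

lemma pc_cpt {r δ : ℝ} (hδ : 0 < δ) : HasCompactSupport (pc r δ) :=
  HasCompactSupport.intro (isCompact_Icc (a := -r/2) (b := r/2)) fun _ ht =>
    pc_zero hδ fun h => ht ⟨h.1.le, h.2.le⟩

lemma pc_integrable {r δ : ℝ} (hδ : 0 < δ) {f : ℝ → ℝ} (hf : Continuous f)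
    (h : ∀ t, pc r δ t = 0 → f t = 0) : Integrable f :=
  hf.integrable_of_hasCompactSupport
    (HasCompactSupport.intro (isCompact_Icc (a := -r/2) (b := r/2)) fun t ht =>
      h t (pc_zero hδ fun h => ht ⟨h.1.le, h.2.le⟩))

lemma pc_int_sq_le {r δ : ℝ} (hr : 0 < r) (hδ : 0 < δ) : ∫ t, (pc r δ t)^2 ≤ r := by
  have h : ∀ t, (pc r δ t)^2 ≤ (Icc (-r/2) (r/2)).indicator (fun _ => (1:ℝ)) t := by
    intro t
    by_cases h1 : t ∈ Icc (-r/2) (r/2)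
    · rw [indicator_of_mem h1]; exact pow_le_one₀ (pc_nonneg _ _ _) (pc_le_one _ _ _)
    · rw [indicator_of_notMem h1, pc_zero hδ fun h => h1 ⟨h.1.le, h.2.le⟩]; simp
  calc ∫ t, (pc r δ t)^2 ≤ ∫ t, (Icc (-r/2) (r/2)).indicator (fun _ => (1:ℝ)) t :=
        integral_mono_of_nonneg (Eventually.of_forall fun t => sq_nonneg _)
          ((integrable_indicator_iff measurableSet_Icc).mpr (by simp)) (Eventually.of_forall h)
    _ = r := by
        rw [integral_indicator measurableSet_Icc]; simp
        rw [max_eq_left (by linarith)]; ring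

lemma pc_int_sq_ge {r δ : ℝ} (hδ : 0 < δ) : r - 2 * δ ≤ ∫ t, (pc r δ t)^2 := by
  have h : ∀ t, (Icc (-r/2+δ) (r/2-δ)).indicator (fun _ => (1:ℝ)) t ≤ (pc r δ t)^2 := by
    intro t
    by_cases h1 : t ∈ Icc (-r/2+δ) (r/2-δ)
    · rw [indicator_of_mem h1, pc_one hδ h1.1 h1.2]; simp
    · rw [indicator_of_notMem h1]; positivity
  have hi : Integrable (fun t => (pc r δ t)^2) := by
    refine pc_integrable (r := r) hδ ((pc_sq_cont r δ).pow 2) fun t ht => ?_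
    rw [ht]; norm_num
  calc r - 2 * δ ≤ ∫ t, (Icc (-r/2+δ) (r/2-δ)).indicator (fun _ => (1:ℝ)) t := by
        rw [integral_indicator measurableSet_Icc]; simp
        left; linarith
    _ ≤ _ := integral_mono_of_nonneg (Eventually.of_forall fun t =>
        indicator_nonneg (fun _ _ => zero_le_one) _) hi (Eventually.of_forall h)

lemma pc_deriv_cpt {r δ : ℝ} (hδ : 0 < δ) : HasCompactSupport (deriv (pc r δ)) :=
  (pc_cpt hδ).deriv

lemma pc_deriv_cont (r δ : ℝ) : Continuous (deriv (pc r δ)) :=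
  (pc_contDiff r δ).continuous_deriv le_rfl

lemma pc_int_mul_deriv {r δ : ℝ} (hδ : 0 < δ) : ∫ t, pc r δ t * deriv (pc r δ) t = 0 := by
  have h : ∀ t, HasDerivAt (fun t => (pc r δ t)^2 / 2) (pc r δ t * deriv (pc r δ) t) t := by
    intro t
    have := ((pc_hasDerivAt r δ t).mul (pc_hasDerivAt r δ t)).div_const 2
    have e : (fun x => (pc r δ * pc r δ) x / 2) = fun t => (pc r δ t)^2 / 2 := by
      funext x; rw [Pi.mul_apply, sq]
    rw [e] at this
    exact this.congr_deriv (by ring)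
  apply integral_eq_zero_of_hasDerivAt_of_integrable h
  · exact pc_integrable (r := r) hδ ((pc_sq_cont r δ).mul (pc_deriv_cont r δ)) fun t ht => by
      rw [ht, zero_mul]
  · exact pc_integrable (r := r) hδ (((pc_sq_cont r δ).pow 2).div_const 2) fun t ht => by
      rw [ht]; norm_num

lemma hasDerivAt_P1 {u : ℝ × ℝ → ℂ} (hu : ContDiff ℝ 1 u) (x : ℝ × ℝ) :
    HasDerivAt (fun t => u (t, x.2)) (fderiv ℝ u x (1, 0)) x.1 := by
  have h : HasFDerivAt u (fderiv ℝ u x) (x.1, x.2) :=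
    (hu.differentiable one_ne_zero x).hasFDerivAt
  exact h.comp_hasDerivAt x.1 ((hasDerivAt_id x.1).prodMk (hasDerivAt_const x.1 x.2))

lemma hasDerivAt_P2 {u : ℝ × ℝ → ℂ} (hu : ContDiff ℝ 1 u) (x : ℝ × ℝ) :
    HasDerivAt (fun t => u (x.1, t)) (fderiv ℝ u x (0, 1)) x.2 := by
  have h : HasFDerivAt u (fderiv ℝ u x) (x.1, x.2) :=
    (hu.differentiable one_ne_zero x).hasFDerivAt
  exact h.comp_hasDerivAt x.2 ((hasDerivAt_const x.2 x.1).prodMk (hasDerivAt_id x.2))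

lemma P1_eq {u : ℝ × ℝ → ℂ} (hu : ContDiff ℝ 1 u) {x : ℝ × ℝ} {d : ℂ}
    (h : HasDerivAt (fun t => u (t, x.2)) d x.1) : fderiv ℝ u x (1, 0) = d :=
  (hasDerivAt_P1 hu x).unique h

lemma P2_eq {u : ℝ × ℝ → ℂ} (hu : ContDiff ℝ 1 u) {x : ℝ × ℝ} {d : ℂ}
    (h : HasDerivAt (fun t => u (x.1, t)) d x.2) : fderiv ℝ u x (0, 1) = d :=
  (hasDerivAt_P2 hu x).unique h

lemma P_cont {u : ℝ × ℝ → ℂ} (hu : ContDiff ℝ 1 u) (e : ℝ × ℝ) :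
    Continuous fun x => fderiv ℝ u x e :=
  (hu.continuous_fderiv one_ne_zero).clm_apply continuous_const

lemma A0_cont : Continuous A₀ := by unfold A₀; fun_prop
lemma Avan_cont : Continuous Avan := by unfold Avan; fun_prop

lemma D1_cont {A : ℝ × ℝ → ℝ × ℝ} (hA : Continuous A) {u : ℝ × ℝ → ℂ} (hu : ContDiff ℝ 1 u) :
    Continuous fun x => fderiv ℝ u x (1, 0) - Complex.I * ((A x).1 : ℂ) * u x :=
  (P_cont hu _).sub ((continuous_const.mul (Complex.continuous_ofReal.comp hA.fst)).mul
    hu.continuous)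

lemma D2_cont {A : ℝ × ℝ → ℝ × ℝ} (hA : Continuous A) {u : ℝ × ℝ → ℂ} (hu : ContDiff ℝ 1 u) :
    Continuous fun x => fderiv ℝ u x (0, 1) - Complex.I * ((A x).2 : ℂ) * u x :=
  (P_cont hu _).sub ((continuous_const.mul (Complex.continuous_ofReal.comp hA.snd)).mul
    hu.continuous)

lemma mag_cont {A : ℝ × ℝ → ℝ × ℝ} (hA : Continuous A) {u : ℝ × ℝ → ℂ} (hu : ContDiff ℝ 1 u) :
    Continuous (magGradSq A u) :=
  ((D1_cont hA hu).norm.pow 2).add ((D2_cont hA hu).norm.pow 2)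

lemma mag_nonneg (A : ℝ × ℝ → ℝ × ℝ) (u : ℝ × ℝ → ℂ) (x : ℝ × ℝ) : 0 ≤ magGradSq A u x := by
  unfold magGradSq; positivity

/-- The energy density. -/
def dens (b : ℝ) (u : ℝ × ℝ → ℂ) (x : ℝ × ℝ) : ℝ :=
  b * magGradSq A₀ u x - ‖u x‖ ^ 2 + ‖u x‖ ^ 4 / 2

lemma dens_cont (b : ℝ) {u : ℝ × ℝ → ℂ} (hu : ContDiff ℝ 1 u) : Continuous (dens b u) := by
  have h1 := mag_cont A0_cont hu
  have h2 := hu.continuous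
  unfold dens
  fun_prop

/-- C¹ functions vanishing with their derivative outside the square. -/
def KK (r : ℝ) (v : ℝ × ℝ → ℂ) : Prop :=
  ContDiff ℝ 1 v ∧ ∀ x ∉ Qsq r, v x = 0 ∧ fderiv ℝ v x (1, 0) = 0 ∧ fderiv ℝ v x (0, 1) = 0

/-- Two-dimensional cutoff. -/
def chi (r δ : ℝ) (y : ℝ × ℝ) : ℝ := pc r δ y.1 * pc r δ y.2

lemma chi_contDiff (r δ : ℝ) : ContDiff ℝ 1 (chi r δ) :=
  ((pc_contDiff r δ).comp contDiff_fst).mul ((pc_contDiff r δ).comp contDiff_snd)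

lemma chi_nonneg (r δ : ℝ) (y : ℝ × ℝ) : 0 ≤ chi r δ y := mul_nonneg (pc_nonneg _ _ _) (pc_nonneg _ _ _)

lemma chi_le_one (r δ : ℝ) (y : ℝ × ℝ) : chi r δ y ≤ 1 :=
  mul_le_one₀ (pc_le_one _ _ _) (pc_nonneg _ _ _) (pc_le_one _ _ _)

lemma chiu_contDiff (r δ : ℝ) {u : ℝ × ℝ → ℂ} (hu : ContDiff ℝ 1 u) :
    ContDiff ℝ 1 fun x => (chi r δ x : ℂ) * u x :=
  (Complex.ofRealCLM.contDiff.comp (chi_contDiff r δ)).mul hu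

lemma chiu_P1 (r δ : ℝ) {u : ℝ × ℝ → ℂ} (hu : ContDiff ℝ 1 u) (x : ℝ × ℝ) :
    fderiv ℝ (fun x => (chi r δ x : ℂ) * u x) x (1, 0) =
      (chi r δ x : ℂ) * fderiv ℝ u x (1, 0) + ((deriv (pc r δ) x.1 * pc r δ x.2 : ℝ) : ℂ) * u x := by
  apply P1_eq (chiu_contDiff r δ hu)
  have h1 : HasDerivAt (fun t => ((chi r δ (t, x.2) : ℝ) : ℂ))
      ((deriv (pc r δ) x.1 * pc r δ x.2 : ℝ) : ℂ) x.1 :=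
    ((pc_hasDerivAt r δ x.1).mul_const (pc r δ x.2)).ofReal_comp
  exact (h1.mul (hasDerivAt_P1 hu x)).congr_deriv (by ring)

lemma chiu_P2 (r δ : ℝ) {u : ℝ × ℝ → ℂ} (hu : ContDiff ℝ 1 u) (x : ℝ × ℝ) :
    fderiv ℝ (fun x => (chi r δ x : ℂ) * u x) x (0, 1) =
      (chi r δ x : ℂ) * fderiv ℝ u x (0, 1) + ((pc r δ x.1 * deriv (pc r δ) x.2 : ℝ) : ℂ) * u x := by
  apply P2_eq (chiu_contDiff r δ hu)
  have h1 : HasDerivAt (fun t => ((chi r δ (x.1, t) : ℝ) : ℂ))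
      ((pc r δ x.1 * deriv (pc r δ) x.2 : ℝ) : ℂ) x.2 :=
    ((pc_hasDerivAt r δ x.2).const_mul (pc r δ x.1)).ofReal_comp
  exact (h1.mul (hasDerivAt_P2 hu x)).congr_deriv (by ring)

lemma notMem_Qsq {r : ℝ} {x : ℝ × ℝ} (h : x ∉ Qsq r) :
    x.1 ∉ Ioo (-r/2) (r/2) ∨ x.2 ∉ Ioo (-r/2) (r/2) := by
  by_contra hh
  push Not at hh
  exact h ⟨hh.1, hh.2⟩

lemma chi_zero {r δ : ℝ} (hδ : 0 < δ) {x : ℝ × ℝ} (h : x ∉ Qsq r) :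
    chi r δ x = 0 ∧ deriv (pc r δ) x.1 * pc r δ x.2 = 0 ∧ pc r δ x.1 * deriv (pc r δ) x.2 = 0 := by
  unfold chi
  rcases notMem_Qsq h with h | h
  · rw [pc_zero hδ h, pc_deriv_zero hδ h]; simp
  · rw [pc_zero hδ h, pc_deriv_zero hδ h]; simp

lemma chiu_KK {r δ : ℝ} (hδ : 0 < δ) {u : ℝ × ℝ → ℂ} (hu : ContDiff ℝ 1 u) :
    KK r fun x => (chi r δ x : ℂ) * u x := by
  refine ⟨chiu_contDiff r δ hu, fun x hx => ?_⟩
  obtain ⟨h1, h2, h3⟩ := chi_zero hδ hx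
  rw [chiu_P1 r δ hu, chiu_P2 r δ hu, h1, h2, h3]
  simp [h1]

lemma chiu_mag (A : ℝ × ℝ → ℝ × ℝ) (r δ : ℝ) {u : ℝ × ℝ → ℂ} (hu : ContDiff ℝ 1 u) (x : ℝ × ℝ) :
    magGradSq A (fun x => (chi r δ x : ℂ) * u x) x =
    ‖(chi r δ x : ℂ) * (fderiv ℝ u x (1, 0) - Complex.I * ((A x).1 : ℂ) * u x)
      + ((deriv (pc r δ) x.1 * pc r δ x.2 : ℝ) : ℂ) * u x‖ ^ 2 +
    ‖(chi r δ x : ℂ) * (fderiv ℝ u x (0, 1) - Complex.I * ((A x).2 : ℂ) * u x)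
      + ((pc r δ x.1 * deriv (pc r δ) x.2 : ℝ) : ℂ) * u x‖ ^ 2 := by
  unfold magGradSq
  rw [chiu_P1 r δ hu, chiu_P2 r δ hu]
  congr 3 <;> ring

lemma Qsq_meas (r : ℝ) : MeasurableSet (Qsq r) := measurableSet_Ioo.prod measurableSet_Ioo

lemma Qsq_sub (r : ℝ) : Qsq r ⊆ Icc (-r/2) (r/2) ×ˢ Icc (-r/2) (r/2) :=
  Set.prod_mono Ioo_subset_Icc_self Ioo_subset_Icc_self

lemma cpt_sq (r : ℝ) : IsCompact (Icc (-r/2) (r/2) ×ˢ Icc (-r/2) (r/2)) :=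
  isCompact_Icc.prod isCompact_Icc

lemma cont_intOn {f : ℝ × ℝ → ℝ} (hf : Continuous f) (r : ℝ) : IntegrableOn f (Qsq r) :=
  (hf.continuousOn.integrableOn_compact (cpt_sq r)).mono_set (Qsq_sub r)

lemma Qsq_vol {r : ℝ} (hr : 0 < r) : volume (Qsq r) = ENNReal.ofReal (r^2) := by
  unfold Qsq
  rw [Measure.volume_eq_prod, Measure.prod_prod, Real.volume_Ioo, ← ENNReal.ofReal_mul (by linarith)]
  congr 1; ring

lemma Qsq_volr {r : ℝ} (hr : 0 < r) : volume.real (Qsq r) = r^2 := by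
  rw [measureReal_def, Qsq_vol hr, ENNReal.toReal_ofReal (by positivity)]

/-- linear vanishing at the boundary -/
lemma bdry_lip {R : ℝ} (hR : 0 < R) {u : ℝ × ℝ → ℂ} (hu : MemH10sq R u) :
    ∃ M ≥ (0:ℝ), ∀ x ∈ Qsq R, ‖u x‖ ≤ M * (R/2 - |x.1|) ∧ ‖u x‖ ≤ M * (R/2 - |x.2|) := by
  obtain ⟨hc, hz⟩ := hu
  obtain ⟨M, hM⟩ := (cpt_sq R).exists_bound_of_continuousOn
    (hc.continuous_fderiv one_ne_zero).continuousOn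
  have hfr : frontier (Qsq R) = Icc (-R/2) (R/2) ×ˢ {-R/2, R/2} ∪
      {-R/2, R/2} ×ˢ Icc (-R/2) (R/2) := by
    unfold Qsq
    rw [frontier_prod_eq, frontier_Ioo (by linarith), closure_Ioo (by linarith)]
  have hconv : Convex ℝ (Icc (-R/2) (R/2) ×ˢ Icc (-R/2) (R/2)) :=
    (convex_Icc _ _).prod (convex_Icc _ _)
  have hM0 : 0 ≤ M := (norm_nonneg _).trans (hM (0, 0) ⟨⟨by simp; linarith, by simp; linarith⟩,
    ⟨by simp; linarith, by simp; linarith⟩⟩)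
  have key : ∀ x ∈ Qsq R, ∀ y ∈ Icc (-R/2) (R/2) ×ˢ Icc (-R/2) (R/2), y ∈ frontier (Qsq R) →
      ‖u x‖ ≤ M * ‖x - y‖ := by
    intro x hx y hy hyf
    have := hconv.norm_image_sub_le_of_norm_fderiv_le (𝕜 := ℝ) (f := u) (C := M)
      (fun z _ => hc.differentiable one_ne_zero z) hM hy (Qsq_sub R hx)
    rwa [hz y hyf, sub_zero] at this
  refine ⟨M, hM0, fun x hx => ?_⟩
  have hx' := Qsq_sub R hx
  have m1 : -R/2 ∈ Icc (-R/2) (R/2) := ⟨le_rfl, by linarith⟩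
  have m2 : R/2 ∈ Icc (-R/2) (R/2) := ⟨by linarith, le_rfl⟩
  obtain ⟨⟨a1, a2⟩, ⟨b1, b2⟩⟩ := hx
  constructor
  · rcases abs_cases x.1 with ⟨h, _⟩ | ⟨h, _⟩
    · have := key x ⟨⟨a1, a2⟩, ⟨b1, b2⟩⟩ (R/2, x.2) ⟨m2, hx'.2⟩ (by rw [hfr]; right; exact ⟨by simp, hx'.2⟩)
      have e : ‖x - (R/2, x.2)‖ = R/2 - |x.1| := by
        rw [Prod.norm_def]; simp [h]; rw [abs_sub_comm, abs_of_pos] <;> linarith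
      rwa [e] at this
    · have := key x ⟨⟨a1, a2⟩, ⟨b1, b2⟩⟩ (-R/2, x.2) ⟨m1, hx'.2⟩ (by rw [hfr]; right; exact ⟨by simp, hx'.2⟩)
      have e : ‖x - (-R/2, x.2)‖ = R/2 - |x.1| := by
        rw [Prod.norm_def]; simp [h]; rw [abs_of_pos] <;> linarith
      rwa [e] at this
  · rcases abs_cases x.2 with ⟨h, _⟩ | ⟨h, _⟩
    · have := key x ⟨⟨a1, a2⟩, ⟨b1, b2⟩⟩ (x.1, R/2) ⟨hx'.1, m2⟩ (by rw [hfr]; left; exact ⟨hx'.1, by simp⟩)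
      have e : ‖x - (x.1, R/2)‖ = R/2 - |x.2| := by
        rw [Prod.norm_def]; simp [h]; rw [abs_sub_comm, abs_of_pos] <;> linarith
      rwa [e] at this
    · have := key x ⟨⟨a1, a2⟩, ⟨b1, b2⟩⟩ (x.1, -R/2) ⟨hx'.1, m1⟩ (by rw [hfr]; left; exact ⟨hx'.1, by simp⟩)
      have e : ‖x - (x.1, -R/2)‖ = R/2 - |x.2| := by
        rw [Prod.norm_def]; simp [h]; rw [abs_of_pos] <;> linarith
      rwa [e] at this

lemma pcd_mul_bound {K R δ t M n : ℝ} (hδ : 0 < δ) (hn : 0 ≤ n) (hM : 0 ≤ M)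
    (hK : ∀ r δ t : ℝ, 0 < δ → |deriv (pc r δ) t| ≤ K / δ) (hK0 : 0 < K)
    (h : n ≤ M * (R/2 - |t|)) : |deriv (pc R δ) t| * n ≤ K * M := by
  by_cases h1 : |t| ≤ R/2 - δ
  · obtain ⟨h2, h3⟩ := abs_le.mp h1
    rw [pc_deriv_zero' hδ (by linarith) h3]; simp; positivity
  · have : n ≤ M * δ := h.trans (by gcongr; linarith)
    calc |deriv (pc R δ) t| * n ≤ (K/δ) * (M * δ) := by
          gcongr; exact hK R δ t hδ
      _ = K * M := by field_simp

/-- Approximation by functions vanishing outside. -/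
lemma cutoff_approx {b R : ℝ} (hb : 0 < b) (hR : 0 < R) {u : ℝ × ℝ → ℂ} (hu : MemH10sq R u)
    {ε : ℝ} (hε : 0 < ε) : ∃ v, KK R v ∧ Fsq b R v < Fsq b R u + ε := by
  obtain ⟨K, hK0, hK⟩ := pc_deriv_bound
  obtain ⟨M, hM0, hM⟩ := bdry_lip hR hu
  have hc := hu.1
  obtain ⟨B1, hB1⟩ := (cpt_sq R).exists_bound_of_continuousOn (D1_cont A0_cont hc).continuousOn
  obtain ⟨B2, hB2⟩ := (cpt_sq R).exists_bound_of_continuousOn (D2_cont A0_cont hc).continuousOn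
  obtain ⟨B0, hB0⟩ := (cpt_sq R).exists_bound_of_continuousOn hc.continuous.continuousOn
  set T : ℝ := b * ((B1 + K * M)^2 + (B2 + K * M)^2) + B0^2 + B0^4/2
  have hlim : Tendsto (fun δ => ∫ x in Qsq R, dens b (fun x => (chi R δ x : ℂ) * u x) x)
      (𝓝[>] (0:ℝ)) (𝓝 (∫ x in Qsq R, dens b u x)) := by
    apply tendsto_integral_filter_of_dominated_convergence (fun _ => T)
    · filter_upwards with δ
      exact (dens_cont b (chiu_contDiff R δ hc)).aestronglyMeasurable
    · filter_upwards [self_mem_nhdsWithin] with δ hδ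
      have hδ : 0 < δ := hδ
      filter_upwards [ae_restrict_mem (Qsq_meas R)] with x hx
      have hx' := Qsq_sub R hx
      have n0 : ‖(chi R δ x : ℂ) * u x‖ ≤ B0 := by
        rw [norm_mul, Complex.norm_real, Real.norm_of_nonneg (chi_nonneg _ _ _)]
        calc chi R δ x * ‖u x‖ ≤ 1 * ‖u x‖ := by gcongr; exact chi_le_one _ _ _
          _ ≤ B0 := by rw [one_mul]; exact hB0 x hx'
      have n1 : ‖(chi R δ x : ℂ) * (fderiv ℝ u x (1, 0) - Complex.I * ((A₀ x).1 : ℂ) * u x)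
          + ((deriv (pc R δ) x.1 * pc R δ x.2 : ℝ) : ℂ) * u x‖ ≤ B1 + K * M := by
        refine (norm_add_le _ _).trans (add_le_add ?_ ?_)
        · rw [norm_mul, Complex.norm_real, Real.norm_of_nonneg (chi_nonneg _ _ _)]
          refine le_trans ?_ (hB1 x hx')
          exact mul_le_of_le_one_left (norm_nonneg _) (chi_le_one _ _ _)
        · rw [norm_mul, Complex.norm_real, norm_mul, Real.norm_eq_abs, Real.norm_of_nonneg (pc_nonneg _ _ _)]
          refine le_trans ?_ (pcd_mul_bound hδ (norm_nonneg _) hM0 hK hK0 (hM x hx).1)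
          gcongr
          exact mul_le_of_le_one_right (abs_nonneg _) (pc_le_one _ _ _)
      have n2 : ‖(chi R δ x : ℂ) * (fderiv ℝ u x (0, 1) - Complex.I * ((A₀ x).2 : ℂ) * u x)
          + ((pc R δ x.1 * deriv (pc R δ) x.2 : ℝ) : ℂ) * u x‖ ≤ B2 + K * M := by
        refine (norm_add_le _ _).trans (add_le_add ?_ ?_)
        · rw [norm_mul, Complex.norm_real, Real.norm_of_nonneg (chi_nonneg _ _ _)]
          refine le_trans ?_ (hB2 x hx')
          exact mul_le_of_le_one_left (norm_nonneg _) (chi_le_one _ _ _)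
        · rw [norm_mul, Complex.norm_real, norm_mul, Real.norm_eq_abs (deriv _ _), Real.norm_of_nonneg (pc_nonneg _ _ _)]
          refine le_trans ?_ (pcd_mul_bound hδ (norm_nonneg _) hM0 hK hK0 (hM x hx).2)
          gcongr
          exact mul_le_of_le_one_left (abs_nonneg _) (pc_le_one _ _ _)
      have hm : magGradSq A₀ (fun x => (chi R δ x : ℂ) * u x) x ≤
          (B1 + K * M)^2 + (B2 + K * M)^2 := by
        rw [chiu_mag A₀ R δ hc]; gcongr
      have hm0 := mag_nonneg A₀ (fun x => (chi R δ x : ℂ) * u x) x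
      have q2 : ‖(chi R δ x : ℂ) * u x‖^2 ≤ B0^2 := by gcongr
      have q4 : ‖(chi R δ x : ℂ) * u x‖^4 ≤ B0^4 := by gcongr
      have q20 : 0 ≤ ‖(chi R δ x : ℂ) * u x‖^2 := by positivity
      have q40 : 0 ≤ ‖(chi R δ x : ℂ) * u x‖^4 := by positivity
      have hbm := mul_le_mul_of_nonneg_left hm hb.le
      have hbm0 := mul_nonneg hb.le hm0
      unfold dens
      rw [Real.norm_eq_abs, abs_le]
      constructor <;> simp only [T] <;> linarith
    · exact integrableOn_const (by rw [Qsq_vol hR]; exact ENNReal.ofReal_ne_top)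
    · filter_upwards [ae_restrict_mem (Qsq_meas R)] with x hx
      apply tendsto_const_nhds.congr'
      obtain ⟨⟨a1, a2⟩, ⟨b1, b2⟩⟩ := hx
      have hmin : 0 < min (min (x.1 + R/2) (R/2 - x.1)) (min (x.2 + R/2) (R/2 - x.2)) := by
        simp only [lt_min_iff]; refine ⟨⟨?_, ?_⟩, ?_, ?_⟩ <;> linarith
      filter_upwards [Ioo_mem_nhdsGT hmin] with δ hδ
      obtain ⟨hδ, h⟩ := hδ
      simp only [lt_min_iff] at h
      have p1 : pc R δ x.1 = 1 := pc_one hδ (by linarith) (by linarith)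
      have p2 : pc R δ x.2 = 1 := pc_one hδ (by linarith) (by linarith)
      have d1 : deriv (pc R δ) x.1 = 0 := pc_deriv_zero' hδ (by linarith) (by linarith)
      have d2 : deriv (pc R δ) x.2 = 0 := pc_deriv_zero' hδ (by linarith) (by linarith)
      have c1 : chi R δ x = 1 := by unfold chi; rw [p1, p2, one_mul]
      unfold dens
      rw [chiu_mag A₀ R δ hc, p1, p2, d1, d2, c1]
      simp [magGradSq, c1]
  have hev := hlim.eventually (gt_mem_nhds (show ∫ x in Qsq R, dens b u x < (∫ x in Qsq R, dens b u x) + ε by linarith))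
  obtain ⟨δ, h1, h2⟩ := (hev.and self_mem_nhdsWithin).exists
  exact ⟨_, chiu_KK h2 hc, h1⟩

lemma van_cpt {f : ℝ × ℝ → ℝ} {r : ℝ} (h : ∀ x ∉ Qsq r, f x = 0) : HasCompactSupport f :=
  HasCompactSupport.intro (cpt_sq r) fun x hx => h x fun hh => hx (Qsq_sub r hh)

lemma corr {f g : ℝ × ℝ → ℝ} (hf : Continuous f) (hg : Continuous g)
    (hfc : HasCompactSupport f) (hgc : HasCompactSupport g) :
    (∀ s, Integrable fun y => f y * g (y + s)) ∧ (Integrable fun s => ∫ y, f y * g (y + s)) ∧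
    ∫ s, ∫ y, f y * g (y + s) = (∫ y, f y) * ∫ y, g y := by
  have fi := hf.integrable_of_hasCompactSupport hfc (μ := volume)
  have gi := hg.integrable_of_hasCompactSupport hgc (μ := volume)
  refine ⟨fun s => ?_, ?_, ?_⟩
  · apply Continuous.integrable_of_hasCompactSupport (by fun_prop)
    exact hfc.mul_right
  all_goals
    have hm : MeasurePreserving (fun z : (ℝ × ℝ) × (ℝ × ℝ) => (z.1, z.1 + z.2))
        ((volume : Measure (ℝ × ℝ)).prod (volume : Measure (ℝ × ℝ))) (volume.prod volume) := measurePreserving_prod_add volume volume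
    have hi : Integrable (fun z : (ℝ × ℝ) × (ℝ × ℝ) => f z.1 * g z.2) (volume.prod volume) :=
      fi.mul_prod gi
    have hi2 : Integrable (fun z : (ℝ × ℝ) × (ℝ × ℝ) => f z.1 * g (z.1 + z.2)) (volume.prod volume) :=
      hm.integrable_comp_of_integrable hi
  · exact hi2.integral_prod_right
  · rw [← integral_integral_swap (f := fun y s => f y * g (y + s)) hi2, ← integral_mul_const]
    congr 1; ext y
    rw [integral_const_mul, integral_add_left_eq_self (f := g)]

lemma int5 {h1 h2 h3 h4 h5 : ℝ × ℝ → ℝ} (i1 : Integrable h1) (i2 : Integrable h2)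
    (i3 : Integrable h3) (i4 : Integrable h4) (i5 : Integrable h5) :
    ∫ x, (h1 x + h2 x + h3 x + h4 x + h5 x) =
      (∫ x, h1 x) + (∫ x, h2 x) + (∫ x, h3 x) + (∫ x, h4 x) + ∫ x, h5 x := by
  have a2 : Integrable fun x => h1 x + h2 x := i1.add i2
  have a3 : Integrable fun x => h1 x + h2 x + h3 x := a2.add i3
  have a4 : Integrable fun x => h1 x + h2 x + h3 x + h4 x := a3.add i4
  rw [integral_add a4 i5, integral_add a3 i4, integral_add a2 i3, integral_add i1 i2]

/-- magnetic translate -/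
def mtr (s : ℝ × ℝ) (u : ℝ × ℝ → ℂ) (y : ℝ × ℝ) : ℂ :=
  Complex.exp (((-((A₀ s).1 * y.1 + (A₀ s).2 * y.2) : ℝ) : ℂ) * Complex.I) * u (y + s)

lemma mtr_contDiff (s : ℝ × ℝ) {u : ℝ × ℝ → ℂ} (hu : ContDiff ℝ 1 u) : ContDiff ℝ 1 (mtr s u) := by
  unfold mtr
  refine ContDiff.mul ?_ (hu.comp (by fun_prop))
  refine ContDiff.cexp (ContDiff.mul (Complex.ofRealCLM.contDiff.comp ?_) contDiff_const)
  refine ContDiff.neg ?_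
  fun_prop

lemma mtr_D1 (s : ℝ × ℝ) {u : ℝ × ℝ → ℂ} (hu : ContDiff ℝ 1 u) (y : ℝ × ℝ) :
    fderiv ℝ (mtr s u) y (1, 0) - Complex.I * ((A₀ y).1 : ℂ) * mtr s u y =
    Complex.exp (((-((A₀ s).1 * y.1 + (A₀ s).2 * y.2) : ℝ) : ℂ) * Complex.I) *
      (fderiv ℝ u (y + s) (1, 0) - Complex.I * ((A₀ (y + s)).1 : ℂ) * u (y + s)) := by
  have h1 : HasDerivAt (fun t : ℝ => (((-((A₀ s).1 * t + (A₀ s).2 * y.2) : ℝ) : ℂ) * Complex.I))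
      (((-((A₀ s).1 * 1) : ℝ) : ℂ) * Complex.I) y.1 :=
    (((((hasDerivAt_id y.1).const_mul (A₀ s).1).add_const _).neg).ofReal_comp).mul_const _
  have h2 : HasDerivAt (fun t : ℝ => u (t + s.1, (y + s).2)) (fderiv ℝ u (y + s) (1, 0)) y.1 :=
    (hasDerivAt_P1 hu (y + s)).comp_add_const y.1 s.1
  have h3 := P1_eq (mtr_contDiff s hu) (h1.cexp.mul h2)
  rw [h3]
  simp only [mtr]
  have e : (((A₀ (y + s)).1 : ℝ) : ℂ) = ((A₀ y).1 : ℂ) + ((A₀ s).1 : ℂ) := by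
    rw [← Complex.ofReal_add]; congr 1; simp [A₀]; ring
  rw [e]
  push_cast
  ring

lemma mtr_D2 (s : ℝ × ℝ) {u : ℝ × ℝ → ℂ} (hu : ContDiff ℝ 1 u) (y : ℝ × ℝ) :
    fderiv ℝ (mtr s u) y (0, 1) - Complex.I * ((A₀ y).2 : ℂ) * mtr s u y =
    Complex.exp (((-((A₀ s).1 * y.1 + (A₀ s).2 * y.2) : ℝ) : ℂ) * Complex.I) *
      (fderiv ℝ u (y + s) (0, 1) - Complex.I * ((A₀ (y + s)).2 : ℂ) * u (y + s)) := by
  have h1 : HasDerivAt (fun t : ℝ => (((-((A₀ s).1 * y.1 + (A₀ s).2 * t) : ℝ) : ℂ) * Complex.I))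
      (((-((A₀ s).2 * 1) : ℝ) : ℂ) * Complex.I) y.2 :=
    (((((hasDerivAt_id y.2).const_mul (A₀ s).2).const_add _).neg).ofReal_comp).mul_const _
  have h2 : HasDerivAt (fun t : ℝ => u ((y + s).1, t + s.2)) (fderiv ℝ u (y + s) (0, 1)) y.2 :=
    (hasDerivAt_P2 hu (y + s)).comp_add_const y.2 s.2
  have h3 := P2_eq (mtr_contDiff s hu) (h1.cexp.mul h2)
  rw [h3]
  simp only [mtr]
  have e : (((A₀ (y + s)).2 : ℝ) : ℂ) = ((A₀ y).2 : ℂ) + ((A₀ s).2 : ℂ) := by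
    rw [← Complex.ofReal_add]; congr 1; simp [A₀]; ring
  rw [e]
  push_cast
  ring

lemma norm_expand (a c : ℝ) (z w : ℂ) : ‖(a : ℂ) * z + (c : ℂ) * w‖^2 =
    a^2 * ‖z‖^2 + c^2 * ‖w‖^2 + a * c * (2 * (z * (starRingEnd ℂ) w).re) := by
  simp only [Complex.sq_norm, Complex.normSq_apply]
  simp
  ring

lemma dens_mtr (b r δ : ℝ) (s : ℝ × ℝ) {u : ℝ × ℝ → ℂ} (hu : ContDiff ℝ 1 u) (y : ℝ × ℝ) :
    dens b (fun x => (chi r δ x : ℂ) * mtr s u x) y =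
    (chi r δ y)^2 * (b * magGradSq A₀ u (y + s) - ‖u (y + s)‖^2)
    + ((deriv (pc r δ) y.1 * pc r δ y.2)^2 + (pc r δ y.1 * deriv (pc r δ) y.2)^2) *
        (b * ‖u (y + s)‖^2)
    + (chi r δ y * (deriv (pc r δ) y.1 * pc r δ y.2)) * (2 * b * (
       (fderiv ℝ u (y + s) (1, 0) - Complex.I * ((A₀ (y + s)).1 : ℂ) * u (y + s)) *
         (starRingEnd ℂ) (u (y + s))).re)
    + (chi r δ y * (pc r δ y.1 * deriv (pc r δ) y.2)) * (2 * b * (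
       (fderiv ℝ u (y + s) (0, 1) - Complex.I * ((A₀ (y + s)).2 : ℂ) * u (y + s)) *
         (starRingEnd ℂ) (u (y + s))).re)
    + (chi r δ y)^4 * (‖u (y + s)‖^4 / 2) := by
  unfold dens
  rw [chiu_mag A₀ r δ (mtr_contDiff s hu), mtr_D1 s hu, mtr_D2 s hu]
  simp only [mtr]
  set e := Complex.exp (((-((A₀ s).1 * y.1 + (A₀ s).2 * y.2) : ℝ) : ℂ) * Complex.I) with he
  have hn : ‖e‖ = 1 := Complex.norm_exp_ofReal_mul_I _
  have hf : ∀ (a c : ℝ) (z w : ℂ), ‖(a : ℂ) * (e * z) + (c : ℂ) * (e * w)‖^2 =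
      ‖(a : ℂ) * z + (c : ℂ) * w‖^2 := by
    intro a c z w
    have : (a : ℂ) * (e * z) + (c : ℂ) * (e * w) = e * ((a : ℂ) * z + (c : ℂ) * w) := by ring
    rw [this, norm_mul, hn, one_mul]
  rw [hf, hf, norm_expand, norm_expand]
  have hc : ‖(chi r δ y : ℂ) * (e * u (y + s))‖ = chi r δ y * ‖u (y + s)‖ := by
    rw [norm_mul, norm_mul, hn, one_mul, Complex.norm_real, Real.norm_of_nonneg (chi_nonneg _ _ _)]
  rw [hc]
  unfold magGradSq
  ring

lemma setint_KK {r : ℝ} {f : ℝ × ℝ → ℝ} (h : ∀ x ∉ Qsq r, f x = 0) :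
    ∫ x in Qsq r, f x = ∫ x, f x :=
  setIntegral_eq_integral_of_forall_compl_eq_zero fun x hx => h x hx

lemma averaging {b r R δ E : ℝ} (hb : 0 < b) (hr : 0 < r) (hR : 0 < R) (hδ : 0 < δ)
    {u : ℝ × ℝ → ℂ} (hu : KK R u) (hE : ∀ v, KK r v → E ≤ Fsq b r v) :
    (R + r)^2 * E ≤ (∫ t, (pc r δ t)^2)^2 * Fsq b R u +
      2 * (∫ t, (deriv (pc r δ) t)^2) * (∫ t, (pc r δ t)^2) * (b * ∫ x in Qsq R, ‖u x‖^2) := by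
  obtain ⟨hc, hz⟩ := hu
  set D1 : ℝ × ℝ → ℂ := fun x => fderiv ℝ u x (1, 0) - Complex.I * ((A₀ x).1 : ℂ) * u x
  set D2 : ℝ × ℝ → ℂ := fun x => fderiv ℝ u x (0, 1) - Complex.I * ((A₀ x).2 : ℂ) * u x
  have hD1 : Continuous D1 := D1_cont A0_cont hc
  have hD2 : Continuous D2 := D2_cont A0_cont hc
  have huc := hc.continuous
  have hmag := mag_cont A0_cont hc
  have hp := pc_sq_cont r δ
  have hp' := pc_deriv_cont r δ
  have hchi := (chi_contDiff r δ).continuous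
  set f1 : ℝ × ℝ → ℝ := fun y => (chi r δ y)^2 with hf1
  set f2 : ℝ × ℝ → ℝ := fun y => (deriv (pc r δ) y.1 * pc r δ y.2)^2 + (pc r δ y.1 * deriv (pc r δ) y.2)^2 with hf2
  set f3 : ℝ × ℝ → ℝ := fun y => chi r δ y * (deriv (pc r δ) y.1 * pc r δ y.2) with hf3
  set f4 : ℝ × ℝ → ℝ := fun y => chi r δ y * (pc r δ y.1 * deriv (pc r δ) y.2) with hf4
  set f5 : ℝ × ℝ → ℝ := fun y => (chi r δ y)^4 with hf5
  set g1 : ℝ × ℝ → ℝ := fun x => b * magGradSq A₀ u x - ‖u x‖^2 with hg1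
  set g2 : ℝ × ℝ → ℝ := fun x => b * ‖u x‖^2 with hg2
  set g3 : ℝ × ℝ → ℝ := fun x => 2 * b * (D1 x * (starRingEnd ℂ) (u x)).re with hg3
  set g4 : ℝ × ℝ → ℝ := fun x => 2 * b * (D2 x * (starRingEnd ℂ) (u x)).re with hg4
  set g5 : ℝ × ℝ → ℝ := fun x => ‖u x‖^4 / 2 with hg5
  have cf1 : Continuous f1 := by fun_prop
  have cf2 : Continuous f2 := by fun_prop
  have cf3 : Continuous f3 := by fun_prop
  have cf4 : Continuous f4 := by fun_prop
  have cf5 : Continuous f5 := by fun_prop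
  have cg1 : Continuous g1 := by fun_prop
  have cg2 : Continuous g2 := by fun_prop
  have cg3 : Continuous g3 :=
    continuous_const.mul (Complex.continuous_re.comp (hD1.mul (Complex.continuous_conj.comp huc)))
  have cg4 : Continuous g4 :=
    continuous_const.mul (Complex.continuous_re.comp (hD2.mul (Complex.continuous_conj.comp huc)))
  have cg5 : Continuous g5 := by fun_prop
  have zf : ∀ x ∉ Qsq r, f1 x = 0 ∧ f2 x = 0 ∧ f3 x = 0 ∧ f4 x = 0 ∧ f5 x = 0 := by
    intro x hx
    obtain ⟨h1, h2, h3⟩ := chi_zero hδ hx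
    simp only [hf1, hf2, hf3, hf4, hf5, h1, h2, h3]
    norm_num
  have zg : ∀ x ∉ Qsq R, g1 x = 0 ∧ g2 x = 0 ∧ g3 x = 0 ∧ g4 x = 0 ∧ g5 x = 0 := by
    intro x hx
    obtain ⟨h1, h2, h3⟩ := hz x hx
    simp only [hg1, hg2, hg3, hg4, hg5, h1, magGradSq, h2, h3]
    norm_num
  obtain ⟨i1, j1, k1⟩ := corr cf1 cg1 (van_cpt fun x hx => (zf x hx).1) (van_cpt fun x hx => (zg x hx).1)
  obtain ⟨i2, j2, k2⟩ := corr cf2 cg2 (van_cpt fun x hx => (zf x hx).2.1) (van_cpt fun x hx => (zg x hx).2.1)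
  obtain ⟨i3, j3, k3⟩ := corr cf3 cg3 (van_cpt fun x hx => (zf x hx).2.2.1) (van_cpt fun x hx => (zg x hx).2.2.1)
  obtain ⟨i4, j4, k4⟩ := corr cf4 cg4 (van_cpt fun x hx => (zf x hx).2.2.2.1) (van_cpt fun x hx => (zg x hx).2.2.2.1)
  obtain ⟨i5, j5, k5⟩ := corr cf5 cg5 (van_cpt fun x hx => (zf x hx).2.2.2.2) (van_cpt fun x hx => (zg x hx).2.2.2.2)
  set v : ℝ × ℝ → ℝ × ℝ → ℂ := fun s x => (chi r δ x : ℂ) * mtr s u x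
  have hd : ∀ s y, dens b (v s) y = f1 y * g1 (y + s) + f2 y * g2 (y + s) + f3 y * g3 (y + s)
      + f4 y * g4 (y + s) + f5 y * g5 (y + s) := fun s y => dens_mtr b r δ s hc y
  have hF : ∀ s, Fsq b r (v s) = (∫ y, f1 y * g1 (y + s)) + (∫ y, f2 y * g2 (y + s)) +
      (∫ y, f3 y * g3 (y + s)) + (∫ y, f4 y * g4 (y + s)) + (∫ y, f5 y * g5 (y + s)) := by
    intro s
    have e : Fsq b r (v s) = ∫ y, dens b (v s) y := by
      apply setint_KK
      intro x hx
      show dens b (v s) x = 0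
      rw [hd]
      obtain ⟨h1, h2, h3, h4, h5⟩ := zf x hx
      rw [h1, h2, h3, h4, h5]; ring
    rw [e]
    simp_rw [hd]
    exact int5 (i1 s) (i2 s) (i3 s) (i4 s) (i5 s)
  have hFi : Integrable fun s => Fsq b r (v s) := by
    simp_rw [hF]
    exact (((j1.add j2).add j3).add j4).add j5
  have hFI : ∫ s, Fsq b r (v s) = (∫ y, f1 y) * (∫ y, g1 y) + (∫ y, f2 y) * (∫ y, g2 y) +
      (∫ y, f3 y) * (∫ y, g3 y) + (∫ y, f4 y) * (∫ y, g4 y) + (∫ y, f5 y) * (∫ y, g5 y) := by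
    simp_rw [hF]
    rw [int5 j1 j2 j3 j4 j5, k1, k2, k3, k4, k5]
  have lower : (R + r)^2 * E ≤ ∫ s, Fsq b r (v s) := by
    have hvan : ∀ s ∉ Qsq (R + r), Fsq b r (v s) = 0 := by
      intro s hs
      show ∫ y in Qsq r, dens b (v s) y = 0
      apply setIntegral_eq_zero_of_forall_eq_zero
      intro y hy
      have : y + s ∉ Qsq R := by
        intro h
        apply hs
        obtain ⟨⟨a1, a2⟩, ⟨b1, b2⟩⟩ := hy
        obtain ⟨⟨c1, c2⟩, ⟨d1, d2⟩⟩ := h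
        simp only [Prod.fst_add, Prod.snd_add] at c1 c2 d1 d2
        refine ⟨⟨?_, ?_⟩, ⟨?_, ?_⟩⟩ <;> linarith
      obtain ⟨h1, h2, h3, h4, h5⟩ := zg _ this
      rw [hd, h1, h2, h3, h4, h5]; ring
    rw [← setint_KK hvan]
    have hfin : volume (Qsq (R + r)) ≠ ⊤ := by
      rw [Qsq_vol (by linarith)]; exact ENNReal.ofReal_ne_top
    have := setIntegral_mono_on (μ := volume) (s := Qsq (R + r)) (f := fun _ => E)
      (g := fun s => Fsq b r (v s)) (integrableOn_const hfin) hFi.integrableOn (Qsq_meas _)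
      (fun s _ => hE _ (chiu_KK hδ (mtr_contDiff s hc)))
    rwa [setIntegral_const, Qsq_volr (by linarith), smul_eq_mul] at this
  have I1 : ∫ y, f1 y = (∫ t, (pc r δ t)^2)^2 := by
    have : ∀ y : ℝ × ℝ, f1 y = (pc r δ y.1)^2 * (pc r δ y.2)^2 := fun y => by
      simp only [hf1, chi]; ring
    simp_rw [this]
    rw [Measure.volume_eq_prod, integral_prod_mul (fun t => (pc r δ t)^2) (fun t => (pc r δ t)^2), sq]
  have I2 : ∫ y, f2 y = 2 * (∫ t, (deriv (pc r δ) t)^2) * (∫ t, (pc r δ t)^2) := by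
    have e : ∀ y : ℝ × ℝ, f2 y = (deriv (pc r δ) y.1)^2 * (pc r δ y.2)^2 +
        (pc r δ y.1)^2 * (deriv (pc r δ) y.2)^2 := fun y => by
      simp only [hf2]; ring
    simp_rw [e]
    have ip : Integrable fun t => (pc r δ t)^2 :=
      pc_integrable (r := r) hδ (hp.pow 2) fun t ht => by rw [ht]; norm_num
    have ip' : Integrable fun t => (deriv (pc r δ) t)^2 := by
      apply Continuous.integrable_of_hasCompactSupport (hp'.pow 2)
      refine HasCompactSupport.intro (isCompact_Icc (a := -r/2) (b := r/2)) fun t ht => ?_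
      show (deriv (pc r δ) t)^2 = 0
      rw [pc_deriv_zero hδ fun h => ht ⟨h.1.le, h.2.le⟩]; norm_num
    rw [Measure.volume_eq_prod, integral_add (ip'.mul_prod ip) (ip.mul_prod ip'),
      integral_prod_mul (fun t => (deriv (pc r δ) t)^2) (fun t => (pc r δ t)^2),
      integral_prod_mul (fun t => (pc r δ t)^2) (fun t => (deriv (pc r δ) t)^2)]
    ring
  have I3 : ∫ y, f3 y = 0 := by
    have e : ∀ y : ℝ × ℝ, f3 y = (pc r δ y.1 * deriv (pc r δ) y.1) * (pc r δ y.2)^2 := fun y => by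
      simp only [hf3, chi]; ring
    simp_rw [e]
    rw [Measure.volume_eq_prod, integral_prod_mul (fun t => pc r δ t * deriv (pc r δ) t)
      (fun t => (pc r δ t)^2), pc_int_mul_deriv hδ, zero_mul]
  have I4 : ∫ y, f4 y = 0 := by
    have e : ∀ y : ℝ × ℝ, f4 y = (pc r δ y.1)^2 * (pc r δ y.2 * deriv (pc r δ) y.2) := fun y => by
      simp only [hf4, chi]; ring
    simp_rw [e]
    rw [Measure.volume_eq_prod, integral_prod_mul (fun t => (pc r δ t)^2)
      (fun t => pc r δ t * deriv (pc r δ) t), pc_int_mul_deriv hδ, mul_zero]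
  have I5 : ∫ y, f5 y ≤ ∫ y, f1 y := by
    apply integral_mono
    · exact cf5.integrable_of_hasCompactSupport (van_cpt fun x hx => (zf x hx).2.2.2.2)
    · exact cf1.integrable_of_hasCompactSupport (van_cpt fun x hx => (zf x hx).1)
    · intro y
      exact pow_le_pow_of_le_one (chi_nonneg _ _ _) (chi_le_one _ _ _) (by norm_num)
  have J2 : ∫ y, g2 y = b * ∫ x in Qsq R, ‖u x‖^2 := by
    rw [setint_KK (fun x hx => by rw [(hz x hx).1]; norm_num), ← integral_const_mul]
  have J5 : 0 ≤ ∫ y, g5 y := integral_nonneg fun y => by simp only [hg5]; positivity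
  have J : Fsq b R u = (∫ y, g1 y) + ∫ y, g5 y := by
    rw [← integral_add (cg1.integrable_of_hasCompactSupport (van_cpt fun x hx => (zg x hx).1))
      (cg5.integrable_of_hasCompactSupport (van_cpt fun x hx => (zg x hx).2.2.2.2))]
    apply setint_KK
    intro x hx
    have h1 := (zg x hx).1
    have h5 := (zg x hx).2.2.2.2
    simp only [hg1, hg5] at h1 h5
    rw [h1, h5, add_zero]
  refine lower.trans ?_
  rw [hFI, I3, I4, I2, J2, J, ← I1]
  have := mul_le_mul_of_nonneg_right I5 J5
  linarith

lemma Fsq_ge {b r : ℝ} (hb : 0 ≤ b) (hr : 0 < r) {u : ℝ × ℝ → ℂ} (hu : ContDiff ℝ 1 u) :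
    (∫ x in Qsq r, ‖u x‖^2) - 2 * r^2 ≤ Fsq b r u := by
  have hfin : volume (Qsq r) ≠ ⊤ := by rw [Qsq_vol hr]; exact ENNReal.ofReal_ne_top
  have h2 : Continuous fun x => ‖u x‖^2 := hu.continuous.norm.pow 2
  have hc : ∫ x in Qsq r, (2:ℝ) = 2 * r^2 := by
    rw [setIntegral_const, Qsq_volr hr, smul_eq_mul, mul_comm]
  rw [← hc, ← integral_sub (cont_intOn h2 r) (integrableOn_const hfin)]
  apply setIntegral_mono_on ((cont_intOn h2 r).sub (integrableOn_const hfin))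
    (cont_intOn (dens_cont b hu) r) (Qsq_meas r)
  intro x _
  have := mul_nonneg hb (mag_nonneg A₀ u x)
  show ‖u x‖^2 - 2 ≤ b * magGradSq A₀ u x - ‖u x‖ ^ 2 + ‖u x‖ ^ 4 / 2
  nlinarith [sq_nonneg (‖u x‖^2 - 2)]

lemma Fsq_ge' {b r : ℝ} (hb : 0 ≤ b) (hr : 0 < r) {u : ℝ × ℝ → ℂ} (hu : ContDiff ℝ 1 u) :
    -(r^2/2) ≤ Fsq b r u := by
  have hfin : volume (Qsq r) ≠ ⊤ := by rw [Qsq_vol hr]; exact ENNReal.ofReal_ne_top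
  have hc : ∫ x in Qsq r, (-(1/2):ℝ) = -(r^2/2) := by
    rw [setIntegral_const, Qsq_volr hr, smul_eq_mul]; ring
  rw [← hc]
  apply setIntegral_mono_on (integrableOn_const hfin)
    (cont_intOn (dens_cont b hu) r) (Qsq_meas r)
  intro x _
  have := mul_nonneg hb (mag_nonneg A₀ u x)
  unfold dens
  nlinarith [sq_nonneg (‖u x‖^2 - 1)]

lemma KK_mem {r : ℝ} (hr : 0 < r) {v : ℝ × ℝ → ℂ} (h : KK r v) : MemH10sq r v := by
  refine ⟨h.1, fun x hx => (h.2 x ?_).1⟩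
  have ho : IsOpen (Qsq r) := isOpen_Ioo.prod isOpen_Ioo
  rw [ho.frontier_eq] at hx
  exact hx.2

lemma KK_zero (r : ℝ) : KK r (fun _ => 0) :=
  ⟨contDiff_const, fun x _ => by simp⟩

lemma Fsq_zero (b r : ℝ) : Fsq b r (fun _ => 0) = 0 := by
  simp [Fsq, magGradSq]

lemma eD_bdd {b r : ℝ} (hb : 0 ≤ b) (hr : 0 < r) : BddBelow (Fsq b r '' {u | MemH10sq r u}) := by
  refine ⟨-(r^2/2), ?_⟩
  rintro _ ⟨u, hu, rfl⟩
  exact Fsq_ge' hb hr hu.1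

lemma eD_ne {b r : ℝ} (hr : 0 < r) : (Fsq b r '' {u | MemH10sq r u}).Nonempty :=
  ⟨_, _, KK_mem hr (KK_zero r), rfl⟩

lemma eD_ge {b r : ℝ} (hb : 0 ≤ b) (hr : 0 < r) : -(r^2/2) ≤ eD b r := by
  apply le_csInf (eD_ne hr)
  rintro _ ⟨u, hu, rfl⟩
  exact Fsq_ge' hb hr hu.1

lemma eD_le {b r : ℝ} (hb : 0 ≤ b) (hr : 0 < r) : eD b r ≤ 0 := by
  have := csInf_le (eD_bdd hb hr) ⟨_, KK_mem hr (KK_zero r), rfl⟩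
  rwa [Fsq_zero] at this

lemma eD_mono {b b' r : ℝ} (hb : 0 ≤ b) (hbb : b ≤ b') (hr : 0 < r) : eD b r ≤ eD b' r := by
  apply le_csInf (eD_ne hr)
  rintro _ ⟨u, hu, rfl⟩
  refine (csInf_le (eD_bdd hb hr) ⟨u, hu, rfl⟩).trans ?_
  apply setIntegral_mono_on (cont_intOn (dens_cont b hu.1) r)
    (cont_intOn (dens_cont b' hu.1) r) (Qsq_meas r)
  intro x _
  have := mul_le_mul_of_nonneg_right hbb (mag_nonneg A₀ u x)
  unfold dens
  linarith

lemma g_ge {g : ℝ → ℝ} (hg : IsLimitG g) {b : ℝ} (hb : 0 < b) : -(1/2) ≤ g b := by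
  refine ge_of_tendsto (hg b hb) ?_
  filter_upwards [eventually_gt_atTop 0] with r hr
  rw [le_div_iff₀ (by positivity)]
  linarith [eD_ge hb.le hr]

lemma g_mono {g : ℝ → ℝ} (hg : IsLimitG g) {b b' : ℝ} (hb : 0 < b) (hbb : b ≤ b') : g b ≤ g b' := by
  refine le_of_tendsto_of_tendsto (hg b hb) (hg b' (hb.trans_le hbb)) ?_
  filter_upwards [eventually_gt_atTop 0] with r hr
  have := eD_mono hb.le hbb hr
  gcongr

lemma E_le_limit {g : ℝ → ℝ} (hg : IsLimitG g) {b r δ E : ℝ} (hb : 0 < b) (hr : 0 < r) (hδ : 0 < δ)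
    (hE : ∀ v, KK r v → E ≤ Fsq b r v) :
    E ≤ (∫ t, (pc r δ t)^2)^2 * g b +
      2 * (∫ t, (deriv (pc r δ) t)^2) * (∫ t, (pc r δ t)^2) * (b * 2) := by
  set m := (∫ t, (pc r δ t)^2)^2 with hm
  set D := 2 * (∫ t, (deriv (pc r δ) t)^2) * (∫ t, (pc r δ t)^2) with hD
  have hm0 : 0 ≤ m := by positivity
  have hD0 : 0 ≤ D := mul_nonneg (mul_nonneg zero_le_two (integral_nonneg fun t => sq_nonneg _))
    (integral_nonneg fun t => sq_nonneg _)
  have key : ∀ R > 0, (R + r)^2 * E ≤ m * (eD b R + 1) + D * (b * (2 * R^2 + 1)) := by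
    intro R hR
    obtain ⟨_, ⟨u, hu, rfl⟩, hu2⟩ := exists_lt_of_csInf_lt (eD_ne (b := b) hR)
      (show eD b R < eD b R + 1/2 by linarith)
    obtain ⟨v, hv, hv2⟩ := cutoff_approx hb hR hu (show (0:ℝ) < 1/2 by norm_num)
    have h1 := averaging hb hr hR hδ hv hE
    have h2 := Fsq_ge hb.le hR hv.1
    have h3 := eD_le hb.le hR
    refine h1.trans ?_
    rw [← hm, ← hD]
    gcongr
    · linarith
    · linarith
  have hl : Tendsto (fun R : ℝ => R⁻¹) atTop (𝓝 0) := tendsto_inv_atTop_zero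
  have t1 : Tendsto (fun R : ℝ => (1 + r * R⁻¹)^2 * E) atTop (𝓝 ((1 + r * 0)^2 * E)) :=
    ((tendsto_const_nhds.add (tendsto_const_nhds.mul hl)).pow 2).mul tendsto_const_nhds
  have t2 : Tendsto (fun R : ℝ => m * (eD b R / R^2 + (R⁻¹)^2) + D * (b * (2 + (R⁻¹)^2))) atTop
      (𝓝 (m * (g b + 0^2) + D * (b * (2 + 0^2)))) :=
    (tendsto_const_nhds.mul ((hg b hb).add (hl.pow 2))).add
      (tendsto_const_nhds.mul (tendsto_const_nhds.mul (tendsto_const_nhds.add (hl.pow 2))))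
  have := le_of_tendsto_of_tendsto t1 t2 (by
    filter_upwards [eventually_gt_atTop 0] with R hR
    have h := div_le_div_of_nonneg_right (key R hR) (show 0 ≤ R^2 by positivity)
    have e1 : (R + r)^2 * E / R^2 = (1 + r * R⁻¹)^2 * E := by field_simp
    have e2 : (m * (eD b R + 1) + D * (b * (2 * R^2 + 1))) / R^2 =
        m * (eD b R / R^2 + (R⁻¹)^2) + D * (b * (2 + (R⁻¹)^2)) := by field_simp
    rwa [e1, e2] at h)
  simpa using this

lemma key_alg {K s b r : ℝ} (hs : 0 < s) (hss : s * s = b) :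
    2 * (2 * K^2 / s) * r * (b * 2) = 8 * K^2 * (r * s) := by
  subst hss; field_simp; ring

lemma key_est : ∃ C₁ > (0:ℝ), ∀ g : ℝ → ℝ, IsLimitG g → ∀ b r E : ℝ, 0 < b → 0 < r →
    (∀ v, KK r v → E ≤ Fsq b r v) → E ≤ r^2 * g b + C₁ * (r * √b) := by
  obtain ⟨K, hK0, hK⟩ := pc_deriv_bound
  refine ⟨8 * K^2 + 2, by positivity, fun g hg b r E hb hr hE => ?_⟩
  have hs : 0 < √b := Real.sqrt_pos.mpr hb
  have hss : √b * √b = b := Real.mul_self_sqrt hb.le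
  have hgb := g_ge hg hb
  by_cases hc : r < 2 * √b
  · have h0 : E ≤ 0 := by
      have := hE _ (KK_zero r); rwa [Fsq_zero] at this
    have h1 : -(r^2/2) ≤ r^2 * g b := by nlinarith [sq_nonneg r]
    have h2 : r^2/2 ≤ r * √b := by nlinarith
    have h3 : 0 ≤ 8 * K^2 * (r * √b) := by positivity
    nlinarith [mul_pos hr hs]
  · push Not at hc
    have h := E_le_limit hg hb hr hs hE
    have p1 := pc_int_sq_le hr hs
    have p2 := pc_int_sq_ge (r := r) hs
    have p3 := pc_int_deriv (r := r) hs hK0 hK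
    set m := ∫ t, (pc r (√b) t)^2
    set d := ∫ t, (deriv (pc r (√b)) t)^2
    have hm0 : 0 ≤ m := by linarith
    have e1 : 2 * d * m * (b * 2) ≤ 8 * K^2 * (r * √b) := by
      calc 2 * d * m * (b * 2) ≤ 2 * (2 * K^2 / √b) * r * (b * 2) := by gcongr
        _ = 8 * K^2 * (r * √b) := by
          exact key_alg hs hss
    have e2 : m^2 * g b ≤ r^2 * g b + 2 * (r * √b) := by
      have q1 : (r - 2 * √b)^2 ≤ m^2 := by gcongr
      have q2 : m^2 ≤ r^2 := by gcongr
      have q3 : (r^2 - m^2) * (-(1/2)) ≤ (r^2 - m^2) * g b :=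
        mul_le_mul_of_nonneg_left hgb (by linarith)
      nlinarith [mul_pos hr hs, mul_pos hs hs]
    linarith

lemma young_sq {η : ℝ} (hη : 0 < η) (p q : ℂ) :
    ‖p - q‖^2 ≤ (1 + η) * ‖p‖^2 + (1 + η⁻¹) * ‖q‖^2 := by
  have h1 : ‖p - q‖^2 ≤ (‖p‖ + ‖q‖)^2 := by gcongr; exact norm_sub_le _ _
  have h2 : 0 ≤ η⁻¹ * (η * ‖p‖ - ‖q‖)^2 := by positivity
  have h3 : η⁻¹ * (η * ‖p‖ - ‖q‖)^2 = η * ‖p‖^2 - 2 * (‖p‖ * ‖q‖) + η⁻¹ * ‖q‖^2 := by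
    field_simp
    ring
  nlinarith

lemma refl_int {σ : ℝ} (hσ : σ = 1 ∨ σ = -1) (h : ℝ × ℝ → ℝ) :
    ∫ x : ℝ × ℝ, h (x.1, σ * x.2) = ∫ x, h x := by
  rcases hσ with rfl | rfl
  · simp
  · have hm : MeasurePreserving (Prod.map id (fun t : ℝ => -t) : ℝ × ℝ → ℝ × ℝ)
        (volume.prod volume) (volume.prod volume) :=
      (MeasurePreserving.id _).prod (Measure.measurePreserving_neg (volume : Measure ℝ))
    have he : MeasurableEmbedding (Prod.map id (fun t : ℝ => -t) : ℝ × ℝ → ℝ × ℝ) :=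
      ((Homeomorph.refl ℝ).prodCongr (Homeomorph.neg ℝ)).measurableEmbedding
    have := hm.integral_comp he h
    rw [Measure.volume_eq_prod, ← this]
    congr 1; ext x; simp [Prod.map]

lemma cov {σ k : ℝ} (hσ : σ = 1 ∨ σ = -1) (c : ℝ × ℝ) (h : ℝ × ℝ → ℝ) :
    ∫ x : ℝ × ℝ, h (k * (x.1 - c.1), σ * (k * (x.2 - c.2))) = (k^2)⁻¹ * ∫ x, h x := by
  have h1 := integral_sub_right_eq_self (μ := (volume : Measure (ℝ × ℝ)))
    (fun x : ℝ × ℝ => h (k * x.1, σ * (k * x.2))) c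
  have h2 := Measure.integral_comp_smul (volume : Measure (ℝ × ℝ))
    (fun x : ℝ × ℝ => h (x.1, σ * x.2)) k
  simp only [Prod.fst_sub, Prod.snd_sub] at h1
  rw [h1]
  simp only [Prod.smul_fst, Prod.smul_snd, smul_eq_mul] at h2
  rw [h2, refl_int hσ]
  simp

lemma G_split (Λ b t r : ℝ) {v : ℝ × ℝ → ℂ} (hvc : ContDiff ℝ 1 v) :
    ∫ y in Qsq r, (Λ * dens b v y + t * ‖v y‖^2) =
      Λ * Fsq b r v + t * ∫ y in Qsq r, ‖v y‖^2 := by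
  have i1 : Integrable (fun y => Λ * dens b v y) (volume.restrict (Qsq r)) :=
    (cont_intOn (dens_cont b hvc) r).const_mul Λ
  have i2 : Integrable (fun y => t * ‖v y‖^2) (volume.restrict (Qsq r)) :=
    (cont_intOn (hvc.continuous.norm.pow 2) r).const_mul t
  rw [integral_add i1 i2, integral_const_mul, integral_const_mul]
  rfl

lemma e_bound {σ ℓ X : ℝ} (hσ : σ = 1 ∨ σ = -1) (hℓ : 0 < ℓ) (hX : |X| ≤ ℓ/2) :
    (-(σ * ℓ * X / 2) - X^2/2)^2 ≤ ℓ^4/4 := by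
  have hX2 : X^2 ≤ (ℓ/2)^2 := by rw [← sq_abs]; gcongr
  obtain ⟨s1, s2⟩ := abs_le.mp hX
  have : |(-(σ * ℓ * X / 2) - X^2/2)| ≤ ℓ^2/2 := by
    rw [abs_le]
    rcases hσ with rfl | rfl
    · constructor <;> nlinarith [sq_nonneg X]
    · constructor <;> nlinarith [sq_nonneg X]
  calc (-(σ * ℓ * X / 2) - X^2/2)^2 = |(-(σ * ℓ * X / 2) - X^2/2)|^2 := (sq_abs _).symm
    _ ≤ (ℓ^2/2)^2 := by gcongr
    _ = ℓ^4/4 := by ring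

lemma fin_alg {Λ b η a k z1 z2 V : ℝ} (hkk : k * k = a) (hb : Λ * b = (1 + η) * a) :
    Λ * (b * (z1^2 + z2^2) - V^2 + V^4/2) =
      (1 + η) * (k^2 * z1^2) + (1 + η) * (a * z2^2) - Λ * V^2 + Λ/2 * V^4 := by
  subst hkk
  linear_combination (z1^2 + z2^2) * hb

set_option maxHeartbeats 2000000 in
lemma test_fn {L R ℓ η a b σ : ℝ} {c : ℝ × ℝ} (hη : 0 < η) (hη1 : η < 1) (hℓ : 0 < ℓ)
    (ha : 0 < a) (hσ : σ = 1 ∨ σ = -1) (hc : c.2 = σ * (a + ℓ/2))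
    (hb : L ^ (-(2:ℝ)/3) * b = (1 + η) * a) (hL : 0 < L)
    (hQ : Ioo (c.1 - ℓ/2) (c.1 + ℓ/2) ×ˢ Ioo (c.2 - ℓ/2) (c.2 + ℓ/2) ⊆ Strip R)
    {v : ℝ × ℝ → ℂ} (hv : KK (ℓ * √a) v) :
    ∃ w : ℝ × ℝ → ℂ, ContDiff ℝ 1 w ∧
      (∀ x ∉ Ioo (c.1 - ℓ/2) (c.1 + ℓ/2) ×ˢ Ioo (c.2 - ℓ/2) (c.2 + ℓ/2), w x = 0) ∧
      Estrip L R w ≤ a⁻¹ * (L ^ (-(2:ℝ)/3) * Fsq b (ℓ * √a) v +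
        (η⁻¹ * ℓ^4 / 2) * ∫ x in Qsq (ℓ * √a), ‖v x‖^2) := by
  obtain ⟨hvc, hvz⟩ := hv
  set Λ := L ^ (-(2:ℝ)/3) with hΛ
  have hΛ0 : 0 < Λ := Real.rpow_pos_of_pos hL _
  set k := √a with hk
  have hk0 : 0 < k := Real.sqrt_pos.mpr ha
  have hkk : k * k = a := Real.mul_self_sqrt ha.le
  have hσ2 : σ * σ = 1 := by rcases hσ with rfl | rfl <;> norm_num
  set S := Ioo (c.1 - ℓ/2) (c.1 + ℓ/2) ×ˢ Ioo (c.2 - ℓ/2) (c.2 + ℓ/2) with hS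
  set Y : ℝ × ℝ → ℝ × ℝ := fun x => (k * (x.1 - c.1), σ * (k * (x.2 - c.2))) with hY
  set φ : ℝ × ℝ → ℝ := fun x => -(c.2^2/2) * (x.1 - c.1) - σ * a / 2 * ((x.1 - c.1) * (x.2 - c.2)) with hφ
  set w : ℝ × ℝ → ℂ := fun x => Complex.exp ((φ x : ℂ) * Complex.I) * v (Y x) with hw
  have hYS : ∀ x ∉ S, Y x ∉ Qsq (ℓ * k) := by
    intro x hx hy
    apply hx
    obtain ⟨⟨a1, a2⟩, ⟨b1, b2⟩⟩ := hy
    simp only [hY] at a1 a2 b1 b2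
    have r1 : -(ℓ/2) < x.1 - c.1 := by
      by_contra hh; push Not at hh; nlinarith
    have r2 : x.1 - c.1 < ℓ/2 := by
      by_contra hh; push Not at hh; nlinarith
    have q : -(ℓ/2) < x.2 - c.2 ∧ x.2 - c.2 < ℓ/2 := by
      rcases hσ with rfl | rfl
      · constructor <;> · by_contra hh; push Not at hh; nlinarith
      · constructor <;> · by_contra hh; push Not at hh; nlinarith
    exact ⟨⟨by linarith, by linarith⟩, ⟨by linarith [q.1], by linarith [q.2]⟩⟩
  have hφc : ContDiff ℝ 1 φ := by
    simp only [hφ]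
    fun_prop
  have hYc : ContDiff ℝ 1 Y := by simp only [hY]; fun_prop
  have hwc : ContDiff ℝ 1 w :=
    (ContDiff.cexp ((Complex.ofRealCLM.contDiff.comp hφc).mul contDiff_const)).mul (hvc.comp hYc)
  have hwz : ∀ x ∉ S, w x = 0 := by
    intro x hx
    simp only [hw]
    rw [(hvz _ (hYS x hx)).1, mul_zero]
  have hD1 : ∀ x, fderiv ℝ w x (1, 0) - Complex.I * ((Avan x).1 : ℂ) * w x =
      Complex.exp ((φ x : ℂ) * Complex.I) *
      ((k : ℂ) * (fderiv ℝ v (Y x) (1, 0) - Complex.I * ((A₀ (Y x)).1 : ℂ) * v (Y x)) -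
        Complex.I * (((-(σ * ℓ * (x.2 - c.2) / 2) - (x.2 - c.2)^2/2 : ℝ)) : ℂ) * v (Y x)) := by
    intro x
    have h1 : HasDerivAt (fun t : ℝ => ((φ (t, x.2) : ℝ) : ℂ) * Complex.I)
        (((-(c.2^2/2) * 1 - σ * a / 2 * (1 * (x.2 - c.2)) : ℝ) : ℂ) * Complex.I) x.1 := by
      have i1 := (hasDerivAt_id x.1).sub_const c.1
      exact (((i1.const_mul (-(c.2^2/2))).sub
        ((i1.mul_const (x.2 - c.2)).const_mul (σ * a / 2))).ofReal_comp).mul_const _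
    have h2 : HasDerivAt (fun t : ℝ => v (Y (t, x.2))) ((k * 1 : ℝ) • fderiv ℝ v (Y x) (1, 0)) x.1 := by
      have i1 : HasDerivAt (fun t : ℝ => k * (t - c.1)) (k * 1) x.1 :=
        ((hasDerivAt_id x.1).sub_const c.1).const_mul k
      exact HasDerivAt.scomp (g₁ := fun t => v (t, (Y x).2)) x.1 (hasDerivAt_P1 hvc (Y x)) i1
    have h3 := P1_eq hwc (h1.cexp.mul h2)
    rw [h3]
    have e : (((Avan x).1 : ℝ) : ℂ) = ((-(c.2^2/2) - σ * a / 2 * (x.2 - c.2) : ℝ) : ℂ) +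
        (k : ℂ) * ((A₀ (Y x)).1 : ℂ) +
        ((-(σ * ℓ * (x.2 - c.2) / 2) - (x.2 - c.2)^2/2 : ℝ) : ℂ) := by
      rw [← Complex.ofReal_mul, ← Complex.ofReal_add, ← Complex.ofReal_add]
      congr 1
      simp only [Avan, A₀, hY]
      have : k * (-(σ * (k * (x.2 - c.2))) / 2) = -(σ * a * (x.2 - c.2)) / 2 := by
        rw [← hkk]; ring
      rw [this]
      have : x.2 = c.2 + (x.2 - c.2) := by ring
      generalize x.2 - c.2 = X at *
      rw [this, hc]
      ring
    rw [e]
    simp only [hw, Complex.real_smul]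
    push_cast
    ring
  have hD2 : ∀ x, fderiv ℝ w x (0, 1) - Complex.I * ((Avan x).2 : ℂ) * w x =
      Complex.exp ((φ x : ℂ) * Complex.I) *
      (((σ * k : ℝ) : ℂ) * (fderiv ℝ v (Y x) (0, 1) - Complex.I * ((A₀ (Y x)).2 : ℂ) * v (Y x))) := by
    intro x
    have h1 : HasDerivAt (fun t : ℝ => ((φ (x.1, t) : ℝ) : ℂ) * Complex.I)
        (((0 - σ * a / 2 * ((x.1 - c.1) * 1) : ℝ) : ℂ) * Complex.I) x.2 := by
      have i1 := (hasDerivAt_id x.2).sub_const c.2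
      exact (((hasDerivAt_const x.2 (-(c.2^2/2) * (x.1 - c.1))).sub
        ((i1.const_mul (x.1 - c.1)).const_mul (σ * a / 2))).ofReal_comp).mul_const _
    have h2 : HasDerivAt (fun t : ℝ => v (Y (x.1, t)))
        ((σ * (k * 1) : ℝ) • fderiv ℝ v (Y x) (0, 1)) x.2 := by
      have i1 : HasDerivAt (fun t : ℝ => σ * (k * (t - c.2))) (σ * (k * 1)) x.2 :=
        (((hasDerivAt_id x.2).sub_const c.2).const_mul k).const_mul σ
      exact HasDerivAt.scomp (g₁ := fun t => v ((Y x).1, t)) x.2 (hasDerivAt_P2 hvc (Y x)) i1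
    have h3 := P2_eq hwc (h1.cexp.mul h2)
    rw [h3]
    have e : ((σ * a / 2 * (x.1 - c.1) : ℝ) : ℂ) = ((σ * k : ℝ) : ℂ) * ((A₀ (Y x)).2 : ℂ) := by
      rw [← Complex.ofReal_mul]
      congr 1
      simp only [A₀, hY]
      rw [← hkk]; ring
    have e0 : (((Avan x).2 : ℝ) : ℂ) = 0 := by simp [Avan]
    have e' : ((0 - σ * a / 2 * ((x.1 - c.1) * 1) : ℝ) : ℂ) =
        - (((σ * k : ℝ) : ℂ) * ((A₀ (Y x)).2 : ℂ)) := by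
      rw [← e, ← Complex.ofReal_neg]; congr 1; ring
    rw [e0, e']
    simp only [Complex.real_smul]
    push_cast
    ring
  have hnw : ∀ x, ‖w x‖ = ‖v (Y x)‖ := by
    intro x
    simp only [hw]
    rw [norm_mul, Complex.norm_exp_ofReal_mul_I, one_mul]
  set G : ℝ × ℝ → ℝ := fun y => Λ * dens b v y + (η⁻¹ * ℓ^4 / 2) * ‖v y‖^2 with hG
  have hGz : ∀ y ∉ Qsq (ℓ * k), G y = 0 := by
    intro y hy
    obtain ⟨h1, h2, h3⟩ := hvz y hy
    simp only [hG, dens, magGradSq, h1, h2, h3]; norm_num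
  have hsz : ∀ x ∉ S, stripDensity L w x = 0 := by
    intro x hx
    obtain ⟨h1, h2, h3⟩ := hvz _ (hYS x hx)
    unfold stripDensity magGradSq
    rw [hD1, hD2, hnw, h1, h2, h3]; norm_num
  have hle : ∀ x, stripDensity L w x ≤ G (Y x) := by
    intro x
    by_cases hx : x ∈ S
    · unfold stripDensity magGradSq
      rw [hD1, hD2, hnw, norm_mul, norm_mul, Complex.norm_exp_ofReal_mul_I, one_mul, one_mul]
      simp only [hG, dens, magGradSq]
      set z1 := fderiv ℝ v (Y x) (1, 0) - Complex.I * ((A₀ (Y x)).1 : ℂ) * v (Y x)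
      set z2 := fderiv ℝ v (Y x) (0, 1) - Complex.I * ((A₀ (Y x)).2 : ℂ) * v (Y x)
      set e := -(σ * ℓ * (x.2 - c.2) / 2) - (x.2 - c.2)^2/2 with he
      have n1 := young_sq hη ((k : ℂ) * z1) (Complex.I * (e : ℂ) * v (Y x))
      rw [norm_mul, norm_mul (Complex.I * (e : ℂ)), norm_mul, Complex.norm_I, Complex.norm_real,
        Complex.norm_real, one_mul, mul_pow, mul_pow, Real.norm_eq_abs, Real.norm_eq_abs, sq_abs, sq_abs] at n1
      have n2 : ‖((σ * k : ℝ) : ℂ) * z2‖^2 ≤ (1 + η) * (a * ‖z2‖^2) := by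
        rw [norm_mul, Complex.norm_real, mul_pow, Real.norm_eq_abs, sq_abs]
        have : (σ * k)^2 = a := by rw [← hkk]; linear_combination k^2 * hσ2
        rw [this]
        have : 0 ≤ a * ‖z2‖^2 := by positivity
        nlinarith
      have e2 : e^2 ≤ ℓ^4/4 := by
        obtain ⟨_, b1, b2⟩ := hx
        exact e_bound hσ hℓ (abs_le.mpr ⟨by linarith, by linarith⟩)
      have e3 : (1 + η⁻¹) * (e^2 * ‖v (Y x)‖^2) ≤ η⁻¹ * ℓ^4/2 * ‖v (Y x)‖^2 := by
        have : 1 ≤ η⁻¹ := (one_le_inv₀ hη).mpr hη1.le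
        calc (1 + η⁻¹) * (e^2 * ‖v (Y x)‖^2) ≤ (η⁻¹ + η⁻¹) * (ℓ^4/4 * ‖v (Y x)‖^2) := by gcongr
          _ = _ := by ring
      have e4 : Λ * (b * (‖z1‖^2 + ‖z2‖^2) - ‖v (Y x)‖^2 + ‖v (Y x)‖^4/2) =
          (1 + η) * (k^2 * ‖z1‖^2) + (1 + η) * (a * ‖z2‖^2) - Λ * ‖v (Y x)‖^2 + Λ/2 * ‖v (Y x)‖^4 := fin_alg hkk hb
      rw [e4, ← hΛ]
      linarith
    · rw [hsz x hx, hGz _ (hYS x hx)]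
  have hScpt : IsCompact (Icc (c.1 - ℓ/2) (c.1 + ℓ/2) ×ˢ Icc (c.2 - ℓ/2) (c.2 + ℓ/2)) :=
    isCompact_Icc.prod isCompact_Icc
  have hSsub : S ⊆ Icc (c.1 - ℓ/2) (c.1 + ℓ/2) ×ˢ Icc (c.2 - ℓ/2) (c.2 + ℓ/2) :=
    Set.prod_mono Ioo_subset_Icc_self Ioo_subset_Icc_self
  have hGc : Continuous G := by
    have h1 := dens_cont b hvc
    have h2 := hvc.continuous
    simp only [hG]
    fun_prop
  have hsc : Continuous (stripDensity L w) := by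
    have h1 := mag_cont Avan_cont hwc
    have h2 := hwc.continuous
    unfold stripDensity
    fun_prop
  have isd : Integrable (stripDensity L w) :=
    hsc.integrable_of_hasCompactSupport
      (HasCompactSupport.intro hScpt fun x hx => hsz x fun h => hx (hSsub h))
  have iG : Integrable (fun x => G (Y x)) :=
    (hGc.comp hYc.continuous).integrable_of_hasCompactSupport
      (HasCompactSupport.intro hScpt fun x hx => hGz _ (hYS x fun h => hx (hSsub h)))
  refine ⟨w, hwc, hwz, ?_⟩
  calc Estrip L R w = ∫ x, stripDensity L w x :=
        setIntegral_eq_integral_of_forall_compl_eq_zero fun x hx => hsz x fun h => hx (hQ h)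
    _ ≤ ∫ x, G (Y x) := integral_mono isd iG hle
    _ = (k^2)⁻¹ * ∫ y, G y := cov hσ c G
    _ = _ := by
        rw [sq, hkk, ← setint_KK hGz]
        congr 1
        exact G_split Λ b _ _ hvc

/-- The small square of side `ℓ` centred at `c`. -/
abbrev Sq (c : ℝ × ℝ) (ℓ : ℝ) : Set (ℝ × ℝ) :=
  Ioo (c.1 - ℓ/2) (c.1 + ℓ/2) ×ˢ Ioo (c.2 - ℓ/2) (c.2 + ℓ/2)

lemma Sq_meas (c : ℝ × ℝ) (ℓ : ℝ) : MeasurableSet (Sq c ℓ) := measurableSet_Ioo.prod measurableSet_Ioo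

lemma Sq_vol (c : ℝ × ℝ) {ℓ : ℝ} (hℓ : 0 < ℓ) : volume (Sq c ℓ) = ENNReal.ofReal (ℓ^2) := by
  rw [Measure.volume_eq_prod, Measure.prod_prod, Real.volume_Ioo, Real.volume_Ioo,
    ← ENNReal.ofReal_mul (by linarith)]
  congr 1; ring

lemma Sq_volr (c : ℝ × ℝ) {ℓ : ℝ} (hℓ : 0 < ℓ) : volume.real (Sq c ℓ) = ℓ^2 := by
  rw [Measure.real, Sq_vol c hℓ, ENNReal.toReal_ofReal (by positivity)]

lemma Estrip_zero (L R : ℝ) : Estrip L R (fun _ => 0) = 0 := by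
  unfold Estrip stripDensity magGradSq
  simp

lemma Estrip_ge {L R ℓ : ℝ} {c : ℝ × ℝ} (hL : 0 < L) (hℓ : 0 < ℓ) {w : ℝ × ℝ → ℂ}
    (hw : ∀ x ∉ Sq c ℓ, w x = 0) : -(L ^ (-(2:ℝ)/3) / 2 * ℓ^2) ≤ Estrip L R w := by
  have hΛ0 : 0 < L ^ (-(2:ℝ)/3) := Real.rpow_pos_of_pos hL _
  unfold Estrip
  by_cases hi : IntegrableOn (stripDensity L w) (Strip R)
  · have hfin : volume (Sq c ℓ) ≠ ⊤ := by rw [Sq_vol c hℓ]; exact ENNReal.ofReal_ne_top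
    have hI : Integrable ((Sq c ℓ).indicator fun _ => -(L ^ (-(2:ℝ)/3) / 2)) :=
      (integrable_indicator_iff (Sq_meas c ℓ)).mpr (integrableOn_const hfin)
    have h1 : ∫ x in Strip R, (Sq c ℓ).indicator (fun _ => -(L ^ (-(2:ℝ)/3) / 2)) x ≤
        ∫ x in Strip R, stripDensity L w x := by
      apply integral_mono hI.integrableOn hi
      intro x
      have hm := mag_nonneg Avan w x
      by_cases hx : x ∈ Sq c ℓ
      · simp only [indicator_of_mem hx]
        unfold stripDensity
        nlinarith [mul_nonneg hΛ0.le (sq_nonneg (‖w x‖^2 - 1))]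
      · simp only [indicator_of_notMem hx]
        unfold stripDensity
        rw [hw x hx]; simpa using hm
    have h2 : ∫ x, (Sq c ℓ).indicator (fun _ => -(L ^ (-(2:ℝ)/3) / 2)) x ≤
        ∫ x in Strip R, (Sq c ℓ).indicator (fun _ => -(L ^ (-(2:ℝ)/3) / 2)) x := by
      have := setIntegral_mono_set (μ := volume) (s := Strip R) (t := univ)
        (f := fun x => - (Sq c ℓ).indicator (fun _ => -(L ^ (-(2:ℝ)/3) / 2)) x)
        hI.neg.integrableOn (Eventually.of_forall fun x => by
          by_cases hx : x ∈ Sq c ℓ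
          · simp only [indicator_of_mem hx]; simp; positivity
          · simp only [indicator_of_notMem hx]; simp)
        (Eventually.of_forall (subset_univ _))
      rw [integral_neg, integral_neg, setIntegral_univ] at this
      linarith
    rw [integral_indicator (Sq_meas c ℓ), setIntegral_const, Sq_volr c hℓ, smul_eq_mul] at h2
    linarith
  · rw [integral_undef hi]
    have : 0 ≤ L ^ (-(2:ℝ)/3) / 2 * ℓ^2 := by positivity
    linarith

lemma g_int_ge {c : ℝ × ℝ} {ℓ γ : ℝ} (hℓ : 0 < ℓ) {h : ℝ × ℝ → ℝ}
    (hi : IntegrableOn h (Sq c ℓ)) (hγ : ∀ x ∈ Sq c ℓ, γ ≤ h x) :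
    ℓ^2 * γ ≤ ∫ x in Sq c ℓ, h x := by
  have hfin : volume (Sq c ℓ) ≠ ⊤ := by rw [Sq_vol c hℓ]; exact ENNReal.ofReal_ne_top
  have := setIntegral_mono_on (integrableOn_const hfin) hi (Sq_meas c ℓ) hγ
  rwa [setIntegral_const, Sq_volr c hℓ, smul_eq_mul] at this

lemma Sq_strip {c : ℝ × ℝ} {ℓ R : ℝ}
    (hQ : Sq c ℓ ⊆ {x : ℝ × ℝ | |x.1| ≤ R/2 ∧ 1/ℓ^2 ≤ |x.2|}) : Sq c ℓ ⊆ Strip R := by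
  rintro ⟨x, y⟩ ⟨⟨h1, h2⟩, hy⟩
  simp only at h1 h2 hy
  have m1 : (((x + (c.1 - ℓ/2))/2, y) : ℝ × ℝ) ∈ Sq c ℓ :=
    ⟨⟨by simp only; linarith, by simp only; linarith⟩, hy⟩
  have m2 : (((x + (c.1 + ℓ/2))/2, y) : ℝ × ℝ) ∈ Sq c ℓ :=
    ⟨⟨by simp only; linarith, by simp only; linarith⟩, hy⟩
  have n1 := (abs_le.mp (hQ m1).1).1
  have n2 := (abs_le.mp (hQ m2).1).2
  simp only at n1 n2
  exact ⟨⟨by simp only; linarith, by simp only; linarith⟩, mem_univ _⟩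

lemma center {c : ℝ × ℝ} {ℓ R : ℝ} (hℓ : 0 < ℓ) (hℓ1 : ℓ < 1)
    (hQ : Sq c ℓ ⊆ {x : ℝ × ℝ | |x.1| ≤ R/2 ∧ 1/ℓ^2 ≤ |x.2|}) :
    ∃ σ a : ℝ, (σ = 1 ∨ σ = -1) ∧ 0 < a ∧ c.2 = σ * (a + ℓ/2) ∧ ∀ x ∈ Sq c ℓ, a ≤ |x.2| := by
  have hc : c ∈ Sq c ℓ := ⟨⟨by linarith, by linarith⟩, ⟨by linarith, by linarith⟩⟩
  have h1 : 1/ℓ^2 ≤ |c.2| := (hQ hc).2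
  have h2 : 1 ≤ 1/ℓ^2 := by
    rw [le_div_iff₀ (by positivity)]; nlinarith
  have h3 : 1 ≤ |c.2| := h2.trans h1
  rcases le_total 0 c.2 with h | h
  · rw [abs_of_nonneg h] at h3
    refine ⟨1, c.2 - ℓ/2, Or.inl rfl, by linarith, by ring, ?_⟩
    rintro x ⟨_, b1, b2⟩
    exact b1.le.trans (le_abs_self _)
  · rw [abs_of_nonpos h] at h3
    refine ⟨-1, -c.2 - ℓ/2, Or.inr rfl, by linarith, by ring, ?_⟩
    rintro x ⟨_, b1, b2⟩
    have := neg_le_abs x.2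
    linarith

lemma main_alg {Λ η ℓ C₁ a r s t gb F I W : ℝ} (hΛ : 1 ≤ Λ) (hη : 0 < η) (hℓ : 0 < ℓ)
    (hC : 0 < C₁) (ha : 0 < a) (hr : a⁻¹ * r^2 = ℓ^2) (hs : a⁻¹ * (r * s) ≤ 2 * (ℓ^2 * (ℓ⁻¹ * t)))
    (ht : 0 < t) (hF : F ≤ r^2 * gb + (C₁ + 1) * (r * s)) (hI : I ≤ 3 * r^2)
    (hW : W ≤ a⁻¹ * (Λ * F + (η⁻¹ * ℓ^4 / 2) * I)) :
    W ≤ Λ * (ℓ^2 * gb) + (2 * (C₁ + 1) + 2) * Λ * (ℓ⁻¹ * t + η⁻¹ * ℓ^4) * ℓ^2 := by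
  have hai : 0 < a⁻¹ := by positivity
  have hΛ0 : 0 < Λ := by linarith
  have hη' : 0 < η⁻¹ := by positivity
  have h1 : a⁻¹ * (Λ * F + (η⁻¹ * ℓ^4 / 2) * I) ≤
      a⁻¹ * (Λ * (r^2 * gb + (C₁ + 1) * (r * s)) + (η⁻¹ * ℓ^4 / 2) * (3 * r^2)) := by gcongr
  have h2 : a⁻¹ * (Λ * (r^2 * gb + (C₁ + 1) * (r * s)) + (η⁻¹ * ℓ^4 / 2) * (3 * r^2)) =
      Λ * (ℓ^2 * gb) + Λ * (C₁ + 1) * (a⁻¹ * (r * s)) + 3/2 * (η⁻¹ * ℓ^4 * ℓ^2) := by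
    rw [← hr]; ring
  have h3 : Λ * (C₁ + 1) * (a⁻¹ * (r * s)) ≤ Λ * (C₁ + 1) * (2 * (ℓ^2 * (ℓ⁻¹ * t))) := by gcongr
  have h4 : 3/2 * (η⁻¹ * ℓ^4 * ℓ^2) ≤ 2 * (Λ * (η⁻¹ * ℓ^4 * ℓ^2)) := by
    have : 0 < η⁻¹ * ℓ^4 * ℓ^2 := by positivity
    nlinarith
  have h5 : 0 ≤ 2 * Λ * (ℓ⁻¹ * t) * ℓ^2 := by positivity
  have h6 : 0 ≤ 2 * (C₁ + 1) * Λ * (η⁻¹ * ℓ^4) * ℓ^2 := by positivity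
  nlinarith

lemma main_small {g : ℝ → ℝ} (hg : IsLimitG g) {C₁ : ℝ} (hC : 0 < C₁)
    (hkey : ∀ b r E : ℝ, 0 < b → 0 < r →
      (∀ v, KK r v → E ≤ Fsq b r v) → E ≤ r^2 * g b + C₁ * (r * √b))
    {L R ℓ η a σ : ℝ} {c : ℝ × ℝ} (hL : 0 < L) (hL1 : L ≤ 1) (hη : 0 < η) (hη1 : η < 1)
    (hℓ : 0 < ℓ) (ha : 0 < a) (hσ : σ = 1 ∨ σ = -1) (hc : c.2 = σ * (a + ℓ/2))
    (hQ : Sq c ℓ ⊆ Strip R) :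
    ∃ w : ℝ × ℝ → ℂ, ContDiff ℝ 1 w ∧ (∀ x ∉ Sq c ℓ, w x = 0) ∧
      Estrip L R w ≤ L ^ (-(2:ℝ)/3) * (ℓ^2 * g ((1 + η) * L ^ ((2:ℝ)/3) * a)) +
        (2 * (C₁ + 1) + 2) * L ^ (-(2:ℝ)/3) * (ℓ⁻¹ * L ^ ((1:ℝ)/3) + η⁻¹ * ℓ ^ 4) * ℓ ^ 2 := by
  have hΛ1 : 1 ≤ L ^ (-(2:ℝ)/3) :=
    Real.one_le_rpow_of_pos_of_le_one_of_nonpos hL hL1 (by norm_num)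
  have ht : 0 < L ^ ((1:ℝ)/3) := Real.rpow_pos_of_pos hL _
  have hm : 0 < L ^ ((2:ℝ)/3) := Real.rpow_pos_of_pos hL _
  have htm : L ^ ((2:ℝ)/3) = (L ^ ((1:ℝ)/3))^2 := by
    rw [← Real.rpow_natCast, ← Real.rpow_mul hL.le]; norm_num
  have hΛm : L ^ (-(2:ℝ)/3) * L ^ ((2:ℝ)/3) = 1 := by
    rw [← Real.rpow_add hL]; norm_num
  set b := (1 + η) * L ^ ((2:ℝ)/3) * a with hb
  have hb0 : 0 < b := by positivity
  have hk : 0 < √a := Real.sqrt_pos.mpr ha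
  have hkk : √a * √a = a := Real.mul_self_sqrt ha.le
  have hr : 0 < ℓ * √a := by positivity
  have hsb : 0 < √b := Real.sqrt_pos.mpr hb0
  have hsb2 : √b ≤ 2 * (L ^ ((1:ℝ)/3) * √a) := by
    apply Real.sqrt_le_iff.mpr
    refine ⟨by positivity, ?_⟩
    rw [hb, htm]
    have : (2 * (L ^ ((1:ℝ)/3) * √a))^2 = 4 * ((L ^ ((1:ℝ)/3))^2 * a) := by
      linear_combination 4 * (L ^ ((1:ℝ)/3))^2 * hkk
    rw [this]
    have : 0 < (L ^ ((1:ℝ)/3))^2 * a := by positivity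
    nlinarith
  have hbd : BddBelow (Fsq b (ℓ * √a) '' {v | KK (ℓ * √a) v}) := by
    refine ⟨-((ℓ * √a)^2/2), ?_⟩
    rintro _ ⟨v, hv, rfl⟩
    exact Fsq_ge' hb0.le hr hv.1
  have hne : (Fsq b (ℓ * √a) '' {v | KK (ℓ * √a) v}).Nonempty := ⟨_, _, KK_zero _, rfl⟩
  set E := sInf (Fsq b (ℓ * √a) '' {v | KK (ℓ * √a) v}) with hE
  have hE0 : E ≤ 0 := (csInf_le hbd ⟨_, KK_zero _, rfl⟩).trans (Fsq_zero _ _).le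
  have hEk := hkey b (ℓ * √a) E hb0 hr fun v hv => csInf_le hbd ⟨v, hv, rfl⟩
  have hε : 0 < min ((ℓ * √a) * √b) ((ℓ * √a)^2) := lt_min (by positivity) (by positivity)
  obtain ⟨_, ⟨v, hv, rfl⟩, hvE⟩ := exists_lt_of_csInf_lt hne
    (show sInf (Fsq b (ℓ * √a) '' {v | KK (ℓ * √a) v}) <
      E + min ((ℓ * √a) * √b) ((ℓ * √a)^2) by rw [← hE]; linarith)
  have m1 := min_le_left ((ℓ * √a) * √b) ((ℓ * √a)^2)
  have m2 := min_le_right ((ℓ * √a) * √b) ((ℓ * √a)^2)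
  have hI := Fsq_ge hb0.le hr hv.1 (b := b)
  obtain ⟨w, w1, w2, w3⟩ := test_fn (L := L) (R := R) (b := b) hη hη1 hℓ ha hσ hc
    (by rw [hb]; linear_combination (1 + η) * a * hΛm) hL hQ hv
  refine ⟨w, w1, w2, main_alg hΛ1 hη hℓ hC ha ?_ ?_ ht (s := √b) (r := ℓ * √a) ?_ ?_ w3⟩
  · rw [mul_pow, sq (√a), hkk]; field_simp
  · calc a⁻¹ * (ℓ * √a * √b) ≤ a⁻¹ * (ℓ * √a * (2 * (L ^ ((1:ℝ)/3) * √a))) := by gcongr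
      _ = a⁻¹ * (ℓ * (2 * (L ^ ((1:ℝ)/3) * (√a * √a)))) := by ring
      _ = 2 * (ℓ^2 * (ℓ⁻¹ * L ^ ((1:ℝ)/3))) := by rw [hkk]; field_simp
  · linarith
  · linarith

/-- The key upper-bound lemma on a small square away from the zero set. -/
theorem lemma_upper_bound (g : ℝ → ℝ) (hg : IsLimitG g) :
    ∃ C > (0:ℝ), ∀ R ≥ (1:ℝ), ∀ L : ℝ, 0 < L → ∀ ℓ ∈ Ioo (0:ℝ) 1, ∀ η ∈ Ioo (0:ℝ) 1,
      ∀ c : ℝ × ℝ,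
      (Ioo (c.1 - ℓ/2) (c.1 + ℓ/2) ×ˢ Ioo (c.2 - ℓ/2) (c.2 + ℓ/2) ⊆
        {x : ℝ × ℝ | |x.1| ≤ R/2 ∧ 1/ℓ^2 ≤ |x.2|}) →
      sInf (Estrip L R '' {w : ℝ × ℝ → ℂ | ContDiff ℝ 1 w ∧
          ∀ x ∉ Ioo (c.1 - ℓ/2) (c.1 + ℓ/2) ×ˢ Ioo (c.2 - ℓ/2) (c.2 + ℓ/2), w x = 0}) ≤
        L ^ (-(2:ℝ)/3) *
          (∫ x in Ioo (c.1 - ℓ/2) (c.1 + ℓ/2) ×ˢ Ioo (c.2 - ℓ/2) (c.2 + ℓ/2),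
            g ((1 + η) * L ^ ((2:ℝ)/3) * |x.2|)) +
        C * L ^ (-(2:ℝ)/3) * (ℓ⁻¹ * L ^ ((1:ℝ)/3) + η⁻¹ * ℓ ^ 4) * ℓ ^ 2 := by

  obtain ⟨C₁, hC, hkey⟩ := key_est
  refine ⟨2 * (C₁ + 1) + 2, by positivity, ?_⟩
  intro R _ L hL ℓ hℓ η hη c hQ
  obtain ⟨hℓ0, hℓ1⟩ := hℓ
  obtain ⟨hη0, hη1⟩ := hη
  have hΛ0 : 0 < L ^ (-(2:ℝ)/3) := Real.rpow_pos_of_pos hL _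
  have ht : 0 < L ^ ((1:ℝ)/3) := Real.rpow_pos_of_pos hL _
  have hm : 0 < L ^ ((2:ℝ)/3) := Real.rpow_pos_of_pos hL _
  have hbd : BddBelow (Estrip L R '' {w : ℝ × ℝ → ℂ | ContDiff ℝ 1 w ∧
          ∀ x ∉ Ioo (c.1 - ℓ/2) (c.1 + ℓ/2) ×ˢ Ioo (c.2 - ℓ/2) (c.2 + ℓ/2), w x = 0}) := by
    refine ⟨-(L ^ (-(2:ℝ)/3) / 2 * ℓ^2), ?_⟩
    rintro _ ⟨w, hw, rfl⟩
    exact Estrip_ge hL hℓ0 hw.2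
  have hinf0 : sInf (Estrip L R '' {w : ℝ × ℝ → ℂ | ContDiff ℝ 1 w ∧
          ∀ x ∉ Ioo (c.1 - ℓ/2) (c.1 + ℓ/2) ×ˢ Ioo (c.2 - ℓ/2) (c.2 + ℓ/2), w x = 0}) ≤ 0 :=
    (csInf_le hbd ⟨fun _ => 0, ⟨contDiff_const, fun _ _ => rfl⟩, rfl⟩).trans (Estrip_zero L R).le
  have hrest : 0 ≤ (2 * (C₁ + 1) + 2) * L ^ (-(2:ℝ)/3) *
      (ℓ⁻¹ * L ^ ((1:ℝ)/3) + η⁻¹ * ℓ ^ 4) * ℓ ^ 2 := by positivity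
  obtain ⟨σ, a, hσ, ha, hc, hxa⟩ := center hℓ0 hℓ1 hQ
  by_cases hi : IntegrableOn (fun x : ℝ × ℝ => g ((1 + η) * L ^ ((2:ℝ)/3) * |x.2|)) (Sq c ℓ)
  · have hgint := g_int_ge hℓ0 hi (γ := g ((1 + η) * L ^ ((2:ℝ)/3) * a)) (fun x hx =>
      g_mono hg (by positivity) (mul_le_mul_of_nonneg_left (hxa x hx) (by positivity)))
    rcases le_total L 1 with hL1 | hL1
    · obtain ⟨w, w1, w2, w3⟩ := main_small hg hC (hkey g hg) hL hL1 hη0 hη1 hℓ0 ha hσ hc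
        (Sq_strip hQ)
      have h1 := csInf_le hbd ⟨w, ⟨w1, w2⟩, rfl⟩
      have h2 := mul_le_mul_of_nonneg_left hgint hΛ0.le
      linarith
    · have hgb : -(1/2) ≤ g ((1 + η) * L ^ ((2:ℝ)/3) * a) := g_ge hg (by positivity)
      have h1 : ℓ^2 * (-(1/2)) ≤ ∫ x in Sq c ℓ, g ((1 + η) * L ^ ((2:ℝ)/3) * |x.2|) :=
        (mul_le_mul_of_nonneg_left hgb (by positivity)).trans hgint
      have h2 := mul_le_mul_of_nonneg_left h1 hΛ0.le
      have ht1 : 1 ≤ L ^ ((1:ℝ)/3) := Real.one_le_rpow hL1 (by norm_num)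
      have hl1 : 1 ≤ ℓ⁻¹ := (one_le_inv₀ hℓ0).mpr hℓ1.le
      have h3 : 1 ≤ ℓ⁻¹ * L ^ ((1:ℝ)/3) + η⁻¹ * ℓ ^ 4 := by
        have : 0 ≤ η⁻¹ * ℓ ^ 4 := by positivity
        nlinarith
      have h4 : 2 * L ^ (-(2:ℝ)/3) * 1 * ℓ^2 ≤ (2 * (C₁ + 1) + 2) * L ^ (-(2:ℝ)/3) *
          (ℓ⁻¹ * L ^ ((1:ℝ)/3) + η⁻¹ * ℓ ^ 4) * ℓ ^ 2 := by
        gcongr; linarith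
      have h5 : 0 ≤ L ^ (-(2:ℝ)/3) * ℓ^2 := by positivity
      linarith
  · have h0 : ∫ x in Ioo (c.1 - ℓ/2) (c.1 + ℓ/2) ×ˢ Ioo (c.2 - ℓ/2) (c.2 + ℓ/2),
        g ((1 + η) * L ^ ((2:ℝ)/3) * |x.2|) = 0 := integral_undef hi
    rw [h0, mul_zero, zero_add]
    exact hinf0.trans hrest

end
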